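/- Let A be a Noetherian semi-local ring such that A_M is a one-dimensional Cohen–Macaulay local ring for every maximal ideal M of A. Then A is strictly closed in Ā if and only if A is an Arf ring. -/

import Mathlib

open scoped TensorProduct

/-- `A` is a *weakly Arf ring*: whenever `x, y, z ∈ A` with `x` a non-zerodivisor on `A`
and the fractions `y/x` and `z/x` in the total ring of fractions `Q(A)` are integral
over `A`, then `y * z ∈ x A`. -/
def IsWeaklyArfRing (A : Type*) [CommRing A] : Prop :=
  ∀ (x y z : A) (hx : x ∈ nonZeroDivisors A),
    IsIntegral A (IsLocalization.mk' (FractionRing A) y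
      (⟨x, hx⟩ : nonZeroDivisors A)) →
    IsIntegral A (IsLocalization.mk' (FractionRing A) z
      (⟨x, hx⟩ : nonZeroDivisors A)) →
    y * z ∈ Ideal.span {x}

/-- `a` belongs to the integral closure of the ideal `I`: it satisfies an equation
`a ^ n + c 1 * a ^ (n - 1) + ⋯ + c n = 0` with `c i ∈ I ^ i`, for some `n ≥ 1`. -/
def MemIdealIntegralClosure {A : Type*} [CommRing A] (I : Ideal A) (a : A) : Prop :=
  ∃ n : ℕ, 0 < n ∧ ∃ c : ℕ → A,
    (∀ i ∈ Finset.Icc 1 n, c i ∈ I ^ i) ∧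
    a ^ n + ∑ i ∈ Finset.Icc 1 n, c i * a ^ (n - i) = 0

/-- The integral closure `Ī` of an ideal `I` of `A`, as a subset of `A`. -/
def idealIntegralClosure {A : Type*} [CommRing A] (I : Ideal A) : Set A :=
  {a | MemIdealIntegralClosure I a}

/-- An ideal `I` is integrally closed if `Ī = I`. -/
def Ideal.IsIntegrallyClosedIdeal {A : Type*} [CommRing A] (I : Ideal A) : Prop :=
  idealIntegralClosure I = (I : Set A)

/-- `A` is an *Arf ring*: (1) every integrally closed ideal of `A` containing a
non-zerodivisor has a principal reduction, i.e. `I ^ (n + 1) = a * I ^ n` for some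
`n ≥ 0` and `a ∈ I`; and (2) whenever `x, y, z ∈ A` with `x` a non-zerodivisor and
`y/x, z/x` integral over `A` in `Q(A)`, then `y * z ∈ x A`. -/
def IsArfRing (A : Type*) [CommRing A] : Prop :=
  (∀ I : Ideal A, Ideal.IsIntegrallyClosedIdeal I →
      (∃ x ∈ I, x ∈ nonZeroDivisors A) →
      ∃ (n : ℕ) (a : A), a ∈ I ∧ I ^ (n + 1) = Ideal.span {a} * I ^ n) ∧
  IsWeaklyArfRing A

set_option synthInstance.maxHeartbeats 1000000 in
set_option maxHeartbeats 2000000 in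
/-- The strict closure `A*` of `A` in the integral closure `Ā` of `A` in its total ring
of fractions `Q(A)`: the set of `x ∈ Ā` such that `x ⊗ 1 = 1 ⊗ x` in `Ā ⊗_A Ā`. -/
def strictClosureSet (A : Type*) [CommRing A] : Set (FractionRing A) :=
  {x | ∃ hx : x ∈ integralClosure A (FractionRing A),
    ((⟨x, hx⟩ : integralClosure A (FractionRing A)) ⊗ₜ[A]
        (1 : integralClosure A (FractionRing A)) :
      TensorProduct A (integralClosure A (FractionRing A))
        (integralClosure A (FractionRing A))) =
    (1 : integralClosure A (FractionRing A)) ⊗ₜ[A]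
        (⟨x, hx⟩ : integralClosure A (FractionRing A))}

/-- `A` is strictly closed in `Ā`, i.e. `A = A*`. -/
def IsStrictlyClosed (A : Type*) [CommRing A] : Prop :=
  ∀ x ∈ strictClosureSet A, ∃ a : A, algebraMap A (FractionRing A) a = x

/-- `xs` is a regular sequence on `R`: for each `i`, the element `xs i` acts injectively
on `R / (xs 0, …, xs (i-1))`. -/
def IsRegularSeq (R : Type*) [CommRing R] (xs : List R) : Prop :=
  ∀ (i : ℕ) (h : i < xs.length),
    IsSMulRegular (R ⧸ Ideal.span {y : R | y ∈ xs.take i}) (xs.get ⟨i, h⟩)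

/-- For a Noetherian local ring `R`, `depth R ≥ n` holds iff there is a regular sequence
of length `n` consisting of elements of the maximal ideal. -/
def RingDepthGE (R : Type*) [CommRing R] [IsLocalRing R] (n : ℕ) : Prop :=
  ∃ xs : List R, xs.length = n ∧ (∀ x ∈ xs, x ∈ IsLocalRing.maximalIdeal R) ∧
    IsRegularSeq R xs

/-!
If `A` is strictly closed, write `f, g : Ā → Ā ⊗ Ā` for the two inclusions. When `y / x` and `z / x`
are integral, `f` and `g` agree on `x`, `y` and `z`, hence on `y z / x`, so `y z ∈ x A`. For
principal reductions it suffices to treat `I = (a, b)` with `a` a non-zerodivisor and to find `c`,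
integral over `I`, such that all fractions `m / c` with `m ∈ I` are integral. Since `A` is
one-dimensional, for large `d` some form of degree `d` in `a, b` generates a reduction of `I ^ d`;
let `c` be the quotient `q / p` of two such forms of consecutive degrees. It satisfies
`c I ^ k = I ^ (k + 1)`, and the point is that it lies in `A`: with `J = c⁻¹ I`, the two inclusions
agree on `c J = I`, and the unit `p / c ^ d` of `Ā` lies in both `J ^ d` and `J ^ (d + 1)`, which
forces `f c = g c`.

If `A` is an Arf ring, we show that it is strictly closed in every finite `T ⊆ Ā` by induction on
the length of `T / A`, letting `A` vary. Let `M` be a maximal ideal containing the conductor, `c` a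
transversal element of `M` and `B = c⁻¹ M` the blow-up, which is again an Arf ring. If
`x ⊗ 1 = 1 ⊗ x`, then modulo `M T` the element `x` is a scalar of the residue field, so we may
assume `x ∈ M T`. By the equational criterion for vanishing of tensors the relation can then be
divided by `c`: it holds for `z = x / c` over `B` in `T' = c⁻¹ M T`. As `T' / B` embeds into
`M (T / A)`, which is shorter than `T / A`, induction yields `z ∈ B`, that is `x ∈ M`.
-/

open scoped nonZeroDivisors Pointwise

universe u

section IntegralClosureOfIdeals

variable {R Q : Type*} [CommRing R] [CommRing Q] [Algebra R Q]

theorem exists_monic_coeff_mem_pow_aeval_eq_zero {N : Submodule R Q} (hN : N.FG) {u : Q}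
    (hu : u ∈ Q⁰) (huN : u ∈ N) (I : Ideal R) {q : Q} (hq : ∀ x ∈ N, q * x ∈ I • N) :
    ∃ p : Polynomial R, p.Monic ∧ (∀ k, p.coeff k ∈ I ^ (p.natDegree - k)) ∧
      Polynomial.aeval q p = 0 := by
  have : Module.Finite R N := Module.Finite.iff_fg.mpr hN
  let f : Module.End R N :=
    (LinearMap.mulLeft R q).restrict fun x hx => Submodule.smul_le_right (hq x hx)
  have hf : LinearMap.range f ≤ I • ⊤ := by
    rintro _ ⟨x, rfl⟩
    exact Submodule.mem_smul_top_iff I N _ |>.mpr (hq x x.2)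
  obtain ⟨p, hp, -, hcoeff, hroot⟩ :=
    LinearMap.exists_monic_and_natDegree_eq_and_coeff_mem_pow_and_aeval_eq_zero R f I hf
  have hpow (k : ℕ) (x : N) : ((f ^ k) x : Q) = q ^ k * x := by
    induction k with
    | zero => simp
    | succ k ih => rw [pow_succ', Module.End.mul_apply, pow_succ', mul_assoc, ← ih]; rfl
  have haeval (x : N) : (Polynomial.aeval f p x : Q) = Polynomial.aeval q p * x := by
    simp [Polynomial.aeval_eq_sum_range, LinearMap.sum_apply, hpow, Finset.sum_mul]
  refine ⟨p, hp, hcoeff, (mul_right_mem_nonZeroDivisors_eq_zero_iff hu).mp ?_⟩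
  rw [← haeval ⟨u, huN⟩, hroot, LinearMap.zero_apply, ZeroMemClass.coe_zero]

theorem isIntegral_of_forall_mul_mem {N : Submodule R Q} (hN : N.FG) {u : Q}
    (hu : u ∈ Q⁰) (huN : u ∈ N) {q : Q} (hq : ∀ x ∈ N, q * x ∈ N) : IsIntegral R q := by
  obtain ⟨p, hp, -, hroot⟩ :=
    exists_monic_coeff_mem_pow_aeval_eq_zero hN hu huN ⊤ (by simpa using hq)
  exact ⟨p, hp, hroot⟩

theorem memIdealIntegralClosure_of_eval_eq_zero {I : Ideal R} {r : R} {p : Polynomial R}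
    (hp : p.Monic) (hcoeff : ∀ k, p.coeff k ∈ I ^ (p.natDegree - k)) (hroot : p.eval r = 0) :
    MemIdealIntegralClosure I r := by
  rcases subsingleton_or_nontrivial R with _ | _
  · exact ⟨1, one_pos, 0, by simp, Subsingleton.elim _ _⟩
  have hdeg : p.natDegree ≠ 0 := fun h => by simp [hp.natDegree_eq_zero.mp h] at hroot
  refine ⟨p.natDegree, hdeg.pos, fun i => p.coeff (p.natDegree - i), fun i hi => ?_, ?_⟩
  · simpa [Nat.sub_sub_self (Finset.mem_Icc.mp hi).2] using hcoeff (p.natDegree - i)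
  · rw [Polynomial.eval_eq_sum_range, ← Finset.sum_flip, Finset.range_eq_Ico,
      Finset.sum_eq_sum_Ico_succ_bot p.natDegree.succ_pos, Nat.sub_zero, hp.coeff_natDegree,
      one_mul] at hroot
    exact hroot

theorem MemIdealIntegralClosure.mono {I J : Ideal R} (h : I ≤ J) {r : R}
    (hr : MemIdealIntegralClosure I r) : MemIdealIntegralClosure J r := by
  obtain ⟨n, hn, c, hc, heq⟩ := hr
  exact ⟨n, hn, c, fun i hi => Ideal.pow_right_mono h i (hc i hi), heq⟩

end IntegralClosureOfIdeals

section Swap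

variable {R O P : Type*} [CommRing R] [CommRing O] [CommRing P] [Algebra R O] [Algebra R P]
  {f g : O →ₐ[R] P} {c : O} {J : Submodule R O}

theorem map_mul_map_mul_map_comm_of_mem_pow (hJ : ∀ j ∈ J, f (c * j) = g (c * j)) {d : ℕ}
    {x y : O} (hx : x ∈ J ^ d) (hy : y ∈ J ^ d) : f c * (f x * g y) = f c * (g x * f y) := by
  induction d generalizing x y with
  | zero =>
    obtain ⟨r, rfl⟩ := Submodule.mem_one.mp (pow_zero J ▸ hx)
    obtain ⟨s, rfl⟩ := Submodule.mem_one.mp (pow_zero J ▸ hy)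
    simp only [AlgHom.commutes]
  | succ d ih =>
    rw [pow_succ] at hx hy
    induction hx using Submodule.mul_induction_on' with
    | add x _ x' _ hx hx' => simp only [map_add, add_mul, mul_add, hx, hx']
    | mem_mul_mem x hx i hi =>
      induction hy using Submodule.mul_induction_on' with
      | add y _ y' _ hy hy' => simp only [map_add, mul_add, hy, hy']
      | mem_mul_mem y hy j hj =>
        have hci : f c * f i = g c * g i := by simpa only [map_mul] using hJ i hi
        have hcj : f c * f j = g c * g j := by simpa only [map_mul] using hJ j hj
        simp only [map_mul]
        linear_combination g j * f i * ih hx hy + g x * f y * (g j * hci - g i * hcj)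

theorem map_eq_map_of_isUnit_of_mem_pow (hJ : ∀ j ∈ J, f (c * j) = g (c * j)) {d : ℕ} {u : O}
    (hu : IsUnit u) (hd : u ∈ J ^ d) (hd' : u ∈ J ^ (d + 1)) : f c = g c := by
  have key : ∀ x ∈ J ^ (d + 1), f c * (f x * g u) = g c * (g x * f u) := by
    intro x hx
    rw [pow_succ] at hx
    induction hx using Submodule.mul_induction_on' with
    | add x _ x' _ hx hx' => simp only [map_add, add_mul, mul_add, hx, hx']
    | mem_mul_mem x hx i hi =>
      have hci : f c * f i = g c * g i := by simpa only [map_mul] using hJ i hi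
      simp only [map_mul]
      linear_combination f i * map_mul_map_mul_map_comm_of_mem_pow hJ hx hd + g x * f u * hci
  refine ((hu.map f).mul (hu.map g)).mul_right_cancel ?_
  rw [key u hd', mul_comm (g u)]

end Swap

section Length

variable {R : Type*} [CommRing R]

theorem length_quotient_smul_top_le {a : R} (ha : a ∈ R⁰) {I J : Ideal R} (haI : a ∈ I)
    (hJ : IsFiniteLength R (R ⧸ J)) :
    Module.length R (J ⧸ (I • ⊤ : Submodule R J)) ≤ Module.length R (R ⧸ Ideal.span {a}) := by
  have haJ : a • J ≤ I • J := by
    rintro _ ⟨j, hj, rfl⟩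
    exact Submodule.smul_mem_smul haI hj
  have hcomap : Submodule.comap J.subtype (I • J) = I • ⊤ := by
    ext j; exact (Submodule.mem_smul_top_iff I J j).symm
  let i : (J ⧸ (I • ⊤ : Submodule R J)) →ₗ[R] R ⧸ I • J :=
    Submodule.mapQ _ _ J.subtype hcomap.ge
  have hi : Function.Injective i := by
    rw [← LinearMap.ker_eq_bot, Submodule.ker_mapQ, hcomap, ← Submodule.mkQ_map_self]
  have hexact : Function.Exact i (Submodule.factor (Submodule.smul_le_right : I • J ≤ J)) := by
    rw [LinearMap.exact_iff, Submodule.ker_mapQ, Submodule.comap_id, Submodule.range_mapQ,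
      Submodule.range_subtype]
  refine (ENat.add_le_add_iff_right (Module.length_ne_top_iff.mpr hJ)).mp ?_
  calc Module.length R (J ⧸ (I • ⊤ : Submodule R J)) + Module.length R (R ⧸ J)
      = Module.length R (R ⧸ I • J) :=
        (Module.length_eq_add_of_exact _ _ hi (Submodule.factor_surjective _) hexact).symm
    _ ≤ Module.length R (R ⧸ a • J) :=
        Module.length_le_of_surjective _ (Submodule.factor_surjective haJ)
    _ = Module.length R (R ⧸ Ideal.span {a}) + Module.length R (R ⧸ J) := by
        rw [add_comm, Module.length_eq_add_of_exact _ _ (Ideal.mulQuot_injective J ha)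
          (Ideal.quotOfMul_surjective J) (Ideal.exact_mulQuot_quotOfMul J)]

theorem exists_sum_smul_mem_smul_top_of_length_lt {M : Ideal R} [M.IsMaximal] {N : Type*}
    [AddCommGroup N] [Module R N] {ι : Type*} [Fintype ι]
    (h : Module.length R (N ⧸ (M • ⊤ : Submodule R N)) < Fintype.card ι) (v : ι → N) :
    ∃ r : ι → R, (∃ i, r i ∉ M) ∧ ∑ i, r i • v i ∈ (M • ⊤ : Submodule R N) := by
  let k := R ⧸ M
  let _ : Field k := Ideal.Quotient.field M
  have hdep : ¬ LinearIndependent k fun i => (M • ⊤ : Submodule R N).mkQ (v i) := by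
    refine fun hind => h.not_ge ?_
    calc (Fintype.card ι : ℕ∞) = Module.length k (ι → k) := by simp [Module.length_of_free]
      _ ≤ Module.length k (N ⧸ (M • ⊤ : Submodule R N)) :=
        Module.length_le_of_injective _
          (linearIndependent_iff_injective_fintypeLinearCombination.mp hind)
      _ = Module.length R (N ⧸ (M • ⊤ : Submodule R N)) :=
        (Module.length_eq_of_surjective Ideal.Quotient.mk_surjective).symm
  obtain ⟨s, hs, i, hi⟩ := Fintype.not_linearIndependent_iff.mp hdep
  choose r hr using fun i => Ideal.Quotient.mk_surjective (s i)
  refine ⟨r, ⟨i, fun h => hi ?_⟩, ?_⟩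
  · rw [← hr, Ideal.Quotient.eq_zero_iff_mem.mpr h]
  · rw [← Submodule.Quotient.mk_eq_zero, ← Submodule.mkQ_apply, map_sum, ← hs]
    exact Finset.sum_congr rfl fun i _ => by rw [map_smul, ← hr]; rfl

end Length

section SemiLocal

variable {R N : Type*} [CommRing R] [AddCommGroup N] [Module R N]

theorem le_of_forall_isMaximal_le_sup_smul {K L : Submodule R N} (hL : L.FG)
    (h : ∀ M : Ideal R, M.IsMaximal → L ≤ K ⊔ M • L) : L ≤ K := by
  suffices hann : (K.colon (L : Set N)) = ⊤ by
    rwa [Submodule.colon_eq_top_iff_subset] at hann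
  by_contra hann
  obtain ⟨M, hM, hle⟩ := Ideal.exists_le_maximal _ hann
  obtain ⟨r, hr, hrL⟩ :=
    Submodule.exists_sub_one_mem_and_smul_le_of_fg_of_le_sup hL le_rfl (h M hM)
  have hrM : r ∈ M :=
    hle (Submodule.mem_colon.mpr fun x hx => hrL (Submodule.smul_mem_pointwise_smul x r L hx))
  exact hM.ne_top ((Ideal.eq_top_iff_one M).mpr (by simpa using M.sub_mem hrM hr))

theorem exists_forall_sub_mem_smul {ι : Type*} [Finite ι] {I : ι → Ideal R}
    (hI : Pairwise (Function.onFun IsCoprime I)) {L : Submodule R N} {x : ι → N}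
    (hx : ∀ i, x i ∈ L) : ∃ y ∈ L, ∀ i, y - x i ∈ I i • L := by
  classical
  have := Fintype.ofFinite ι
  choose e he using fun i => Ideal.exists_forall_sub_mem_ideal hI (Pi.single i 1)
  refine ⟨∑ j, e j • x j, L.sum_mem fun j _ => L.smul_mem _ (hx j), fun i => ?_⟩
  have hsum : ∑ j, e j • x j - x i = ∑ j, (e j - Pi.single (M := fun _ => R) j 1 i) • x j := by
    simp [sub_smul, Pi.single_apply]
  exact hsum ▸ Submodule.sum_mem _ fun j _ => Submodule.smul_mem_smul (he j i) (hx j)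

end SemiLocal

section PairPowers

variable {R : Type*} [CommRing R] {a b : R}

theorem pow_mul_pow_mem_pow {I : Ideal R} (ha : a ∈ I) (hb : b ∈ I) (i j : ℕ) :
    a ^ i * b ^ j ∈ I ^ (i + j) :=
  pow_add I i j ▸ Ideal.mul_mem_mul (Ideal.pow_mem_pow ha i) (Ideal.pow_mem_pow hb j)

theorem exists_sum_mul_pow_mem_mul_pow [IsNoetherianRing R] [Ring.KrullDimLE 1 R] (ha : a ∈ R⁰)
    (b : R) (M : Ideal R) [M.IsMaximal] :
    ∃ (n : ℕ) (r : ℕ → R), (∃ i ≤ n, r i ∉ M) ∧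
      ∑ i ∈ Finset.range (n + 1), r i * (a ^ i * b ^ (n - i)) ∈ M * Ideal.span {a, b} ^ n := by
  by_cases haM : a ∈ M
  · have hfin : IsFiniteLength R (R ⧸ Ideal.span {a}) :=
      isFiniteLength_quotient_span_singleton R ha
    obtain ⟨n, hn⟩ := ENat.ne_top_iff_exists.mp (Module.length_ne_top_iff.mpr hfin)
    set J := Ideal.span {a, b} ^ n
    have hmem (i : Fin (n + 1)) : a ^ (i : ℕ) * b ^ (n - i) ∈ J := by
      simpa only [Nat.add_sub_of_le i.is_le] using pow_mul_pow_mem_pow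
        (Ideal.subset_span (by simp)) (Ideal.subset_span (by simp)) (i : ℕ) (n - i)
    have hJ : IsFiniteLength R (R ⧸ J) := by
      have haJ : Ideal.span {a ^ n} ≤ J := by
        simpa [Ideal.span_singleton_le_iff_mem] using hmem (Fin.last n)
      exact (isFiniteLength_quotient_span_singleton R (pow_mem ha n)).of_surjective
        (Submodule.factor_surjective haJ)
    have hlt : Module.length R (J ⧸ (M • ⊤ : Submodule R J)) < Fintype.card (Fin (n + 1)) :=
      (length_quotient_smul_top_le ha haM hJ).trans_lt
        (by rw [← hn, Fintype.card_fin]; exact_mod_cast n.lt_succ_self)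
    obtain ⟨r, ⟨i, hi⟩, hsum⟩ :=
      exists_sum_smul_mem_smul_top_of_length_lt hlt fun i => (⟨_, hmem i⟩ : J)
    refine ⟨n, fun i => r (Fin.ofNat (n + 1) i), ⟨i, i.is_le, by simpa using hi⟩, ?_⟩
    simpa [Finset.sum_range] using (Submodule.mem_smul_top_iff M J _).mp hsum
  · refine ⟨1, Pi.single 0 a - Pi.single 1 b, ⟨0, zero_le_one, by simpa using haM⟩, ?_⟩
    simp [Finset.sum_range_succ, mul_comm]

theorem exists_monic_form_mem_mul_pow {M : Ideal R} [hM : M.IsMaximal] {I : Ideal R} (ha : a ∈ I)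
    (hb : b ∈ I) {n : ℕ} {r : ℕ → R} (hr : ∃ i ≤ n, r i ∉ M) {k : ℕ}
    (hsum : b ^ k * ∑ i ∈ Finset.range (n + 1), r i * (a ^ i * b ^ (n - i)) ∈ M * I ^ (n + k)) :
    ∃ (t m : ℕ) (s : ℕ → R),
      b ^ m * (a ^ t + ∑ i ∈ Finset.range t, s i * (a ^ i * b ^ (t - i))) ∈ M * I ^ (t + m) := by
  induction n generalizing k with
  | zero =>
    obtain ⟨s, c, hc, hs⟩ := hM.exists_inv (by simpa using hr : r 0 ∉ M)
    refine ⟨0, k, 0, ?_⟩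
    convert add_mem (Ideal.mul_mem_left _ s hsum)
      (Ideal.mul_mem_mul hc (pow_mul_pow_mem_pow ha hb 0 k)) using 1
    simp only [zero_add, Finset.range_one, Finset.sum_singleton, Finset.range_zero,
      Finset.sum_empty, pow_zero, Nat.sub_self]
    linear_combination b ^ k * hs.symm
  | succ n ih =>
    by_cases hn : r (n + 1) ∈ M
    · obtain ⟨i, hi, hri⟩ := hr
      have hin : i ≤ n := Nat.le_of_lt_succ (hi.lt_of_ne fun h => hri (h ▸ hn))
      refine ih ⟨i, hin, hri⟩ (k := k + 1) ?_
      have hpow : ∀ i ∈ Finset.range (n + 1),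
          r i * (a ^ i * b ^ (n + 1 - i)) = b * (r i * (a ^ i * b ^ (n - i))) := by
        intro i hi
        rw [Nat.sub_add_comm (Finset.mem_range_succ_iff.mp hi), pow_succ]
        ring
      convert sub_mem hsum (Ideal.mul_mem_mul hn (pow_mul_pow_mem_pow ha hb (n + 1) k)) using 1
      · rw [add_assoc, add_comm 1]
      · rw [Finset.sum_range_succ _ (n + 1), Finset.sum_congr rfl hpow, ← Finset.mul_sum,
          Nat.sub_self]
        ring
    · obtain ⟨s, c, hc, hs⟩ := hM.exists_inv hn
      refine ⟨n + 1, k, fun i => s * r i, ?_⟩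
      convert add_mem (Ideal.mul_mem_left _ s hsum)
        (Ideal.mul_mem_mul hc (pow_mul_pow_mem_pow ha hb (n + 1) k)) using 1
      rw [Finset.sum_range_succ _ (n + 1)]
      simp_rw [mul_assoc s, ← Finset.mul_sum]
      simp only [Nat.sub_self, pow_zero, mul_one]
      linear_combination b ^ k * a ^ (n + 1) * hs.symm

theorem exists_sub_pow_mem_and_pow_mul_sub_pow_mem [IsNoetherianRing R] [Ring.KrullDimLE 1 R]
    (ha : a ∈ R⁰) (b : R) (M : Ideal R) [M.IsMaximal] :
    ∃ n : ℕ, ∀ d ≥ n, ∃ (p : R) (e : ℕ),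
      p - a ^ (d + 1) ∈ Ideal.span {b} * Ideal.span {a, b} ^ d ∧
      b ^ e * p - b ^ (e + d + 1) ∈ M * Ideal.span {a, b} ^ (e + d + 1) := by
  have haI : a ∈ Ideal.span {a, b} := Ideal.subset_span (by simp)
  have hbI : b ∈ Ideal.span {a, b} := Ideal.subset_span (by simp)
  obtain ⟨n, r, hr, hsum⟩ := exists_sum_mul_pow_mem_mul_pow ha b M
  obtain ⟨t, m, s, hs⟩ := exists_monic_form_mem_mul_pow haI hbI hr (k := 0) (by simpa using hsum)
  set H := a ^ t + ∑ i ∈ Finset.range t, s i * (a ^ i * b ^ (t - i))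
  set I := Ideal.span {a, b}
  refine ⟨t, fun d hd => ?_⟩
  obtain ⟨c, rfl⟩ := Nat.exists_eq_add_of_le hd
  refine ⟨b ^ (t + c + 1) + a ^ (c + 1) * H, m, ?_, ?_⟩
  · have hterm (i) (hi : i ∈ Finset.range t) :
        a ^ (c + 1) * (s i * (a ^ i * b ^ (t - i))) ∈ Ideal.span {b} * I ^ (t + c) := by
      obtain ⟨j, rfl⟩ := Nat.exists_eq_add_of_lt (Finset.mem_range.mp hi)
      have hij := pow_mul_pow_mem_pow haI hbI (c + 1 + i) j
      rw [show c + 1 + i + j = i + j + 1 + c by ring] at hij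
      convert Ideal.mul_mem_mul (Ideal.mem_span_singleton_self b)
        (Ideal.mul_mem_left _ (s i) hij) using 1
      rw [show i + j + 1 - i = j + 1 by omega]
      ring
    have hb' : b ^ (t + c + 1) ∈ Ideal.span {b} * I ^ (t + c) :=
      pow_succ' b (t + c) ▸
        Ideal.mul_mem_mul (Ideal.mem_span_singleton_self b) (Ideal.pow_mem_pow hbI _)
    convert add_mem hb' (sum_mem hterm) using 1
    rw [← Finset.mul_sum]
    ring
  · convert Ideal.mul_mem_mul (Ideal.pow_mem_pow haI (c + 1)) hs using 1 <;> ring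

theorem span_pair_pow_succ_le (a b : R) (d : ℕ) :
    Ideal.span {a, b} ^ (d + 1) ≤
      Ideal.span {a ^ (d + 1)} ⊔ Ideal.span {b} * Ideal.span {a, b} ^ d := by
  set I := Ideal.span {a, b}
  have haI : Ideal.span {a} ≤ I := Ideal.span_mono (by simp)
  have hI : I = Ideal.span {a} ⊔ Ideal.span {b} := Ideal.span_insert a {b}
  induction d with
  | zero => simp [hI]
  | succ d ih =>
    calc I ^ (d + 1 + 1)
        = Ideal.span {a} * I ^ (d + 1) ⊔ Ideal.span {b} * I ^ (d + 1) := by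
          rw [pow_succ' I (d + 1), ← Ideal.sup_mul, ← hI]
      _ ≤ Ideal.span {a} * (Ideal.span {a ^ (d + 1)} ⊔ Ideal.span {b} * I ^ d) ⊔
            Ideal.span {b} * I ^ (d + 1) := by gcongr
      _ = Ideal.span {a ^ (d + 1 + 1)} ⊔ (Ideal.span {b} * (Ideal.span {a} * I ^ d) ⊔
            Ideal.span {b} * I ^ (d + 1)) := by
          rw [Ideal.mul_sup, Ideal.span_singleton_mul_span_singleton, ← pow_succ', sup_assoc,
            mul_left_comm]
      _ = Ideal.span {a ^ (d + 1 + 1)} ⊔ Ideal.span {b} * I ^ (d + 1) := by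
          congr 1
          refine sup_eq_right.mpr (Ideal.mul_mono_right ?_)
          exact pow_succ' I d ▸ Ideal.mul_mono_left haI

theorem pow_le_span_mul_pow_sup_span_pow_mul {p : R} {d : ℕ}
    (hp : p - a ^ (d + 1) ∈ Ideal.span {b} * Ideal.span {a, b} ^ d) (j : ℕ) :
    Ideal.span {a, b} ^ (d + 1 + j) ≤
      Ideal.span {p} * Ideal.span {a, b} ^ j ⊔
        Ideal.span {b ^ (j + 1)} * Ideal.span {a, b} ^ d := by
  set I := Ideal.span {a, b}
  have hbI : b ∈ I := Ideal.subset_span (by simp)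
  have hbase : I ^ (d + 1) ≤ Ideal.span {p} ⊔ Ideal.span {b} * I ^ d := by
    refine (span_pair_pow_succ_le a b d).trans (sup_le ?_ le_sup_right)
    rw [Ideal.span_singleton_le_iff_mem, ← sub_sub_cancel p (a ^ (d + 1))]
    exact sub_mem (Ideal.mem_sup_left (Ideal.mem_span_singleton_self p)) (Ideal.mem_sup_right hp)
  induction j with
  | zero => simpa using hbase
  | succ j ih =>
    calc I ^ (d + 1 + (j + 1)) = I ^ (d + 1 + j) * I := pow_succ _ _
      _ ≤ (Ideal.span {p} * I ^ j ⊔ Ideal.span {b ^ (j + 1)} * I ^ d) * I := Ideal.mul_mono_left ih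
      _ = Ideal.span {p} * I ^ (j + 1) ⊔ Ideal.span {b ^ (j + 1)} * I ^ (d + 1) := by
        rw [Ideal.sup_mul, mul_assoc, mul_assoc, ← pow_succ, ← pow_succ]
      _ ≤ Ideal.span {p} * I ^ (j + 1) ⊔
          Ideal.span {b ^ (j + 1)} * (Ideal.span {p} ⊔ Ideal.span {b} * I ^ d) := by gcongr
      _ = Ideal.span {p} * I ^ (j + 1) ⊔ Ideal.span {p} * Ideal.span {b ^ (j + 1)} ⊔
          Ideal.span {b ^ (j + 1 + 1)} * I ^ d := by
        rw [Ideal.mul_sup, ← mul_assoc, Ideal.span_singleton_mul_span_singleton _ b, ← pow_succ,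
          ← sup_assoc, mul_comm (Ideal.span {b ^ (j + 1)})]
      _ = Ideal.span {p} * I ^ (j + 1) ⊔ Ideal.span {b ^ (j + 1 + 1)} * I ^ d := by
        congr 1
        refine sup_eq_left.mpr (Ideal.mul_mono_right ?_)
        exact (Ideal.span_singleton_le_iff_mem _).mpr (Ideal.pow_mem_pow hbI _)

theorem pow_le_span_mul_pow_sup_mul_pow {p : R} {d e : ℕ} {M : Ideal R}
    (hp : p - a ^ (d + 1) ∈ Ideal.span {b} * Ideal.span {a, b} ^ d)
    (hp' : b ^ e * p - b ^ (e + d + 1) ∈ M * Ideal.span {a, b} ^ (e + d + 1)) :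
    Ideal.span {a, b} ^ (d + 1 + (e + d)) ≤
      Ideal.span {p} * Ideal.span {a, b} ^ (e + d) ⊔ M * Ideal.span {a, b} ^ (d + 1 + (e + d)) := by
  set I := Ideal.span {a, b}
  have hbI : b ∈ I := Ideal.subset_span (by simp)
  have hb : Ideal.span {b ^ (e + d + 1)} ≤ Ideal.span {p} * I ^ e ⊔ M * I ^ (e + d + 1) := by
    rw [Ideal.span_singleton_le_iff_mem, ← sub_sub_cancel (b ^ e * p) (b ^ (e + d + 1))]
    refine sub_mem (Ideal.mem_sup_left ?_) (Ideal.mem_sup_right hp')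
    exact Ideal.mul_mem_mul_rev (Ideal.mem_span_singleton_self p) (Ideal.pow_mem_pow hbI e)
  calc I ^ (d + 1 + (e + d)) ≤
        Ideal.span {p} * I ^ (e + d) ⊔ Ideal.span {b ^ (e + d + 1)} * I ^ d :=
        pow_le_span_mul_pow_sup_span_pow_mul hp (e + d)
    _ ≤ Ideal.span {p} * I ^ (e + d) ⊔ (Ideal.span {p} * I ^ e ⊔ M * I ^ (e + d + 1)) * I ^ d := by
        gcongr
    _ = Ideal.span {p} * I ^ (e + d) ⊔ M * I ^ (d + 1 + (e + d)) := by
        rw [Ideal.sup_mul, mul_assoc, mul_assoc, ← pow_add, ← pow_add, ← sup_assoc, sup_idem,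
          show e + d + 1 + d = d + 1 + (e + d) by ring]

end PairPowers

section PrincipalReductions

variable {R : Type*} [CommRing R]

theorem exists_pow_add_eq_span_mul_pow [Finite (MaximalSpectrum R)] {I : Ideal R} (hI : I.FG)
    {k : ℕ} (h : ∀ M : Ideal R, M.IsMaximal →
      ∃ p ∈ I ^ k, ∃ N, I ^ (k + N) ≤ Ideal.span {p} * I ^ N ⊔ M * I ^ (k + N)) :
    ∃ p ∈ I ^ k, ∃ N, I ^ (k + N) = Ideal.span {p} * I ^ N := by
  have := Fintype.ofFinite (MaximalSpectrum R)
  choose p hp N hN using fun M : MaximalSpectrum R => h M.asIdeal M.isMaximal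
  obtain ⟨q, hq, hqp⟩ := exists_forall_sub_mem_smul
    (fun _ _ => MaximalSpectrum.isCoprime_of_ne) hp
  set K := Finset.univ.sup N
  have hqI : Ideal.span {q} * I ^ K ≤ I ^ (k + K) := by
    rw [pow_add]
    exact Ideal.mul_mono_left ((Ideal.span_singleton_le_iff_mem _).mpr hq)
  refine ⟨q, hq, K, le_antisymm (le_of_forall_isMaximal_le_sup_smul hI.pow fun M hM => ?_) hqI⟩
  obtain ⟨e, he⟩ := Nat.exists_eq_add_of_le (Finset.le_sup (f := N) (Finset.mem_univ ⟨M, hM⟩))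
  have hpq : Ideal.span {p ⟨M, hM⟩} ≤ Ideal.span {q} ⊔ M * I ^ k := by
    rw [Ideal.span_singleton_le_iff_mem, ← sub_sub_cancel q (p _)]
    exact sub_mem (Ideal.mem_sup_left (Ideal.mem_span_singleton_self q))
      (Ideal.mem_sup_right (hqp ⟨M, hM⟩))
  calc I ^ (k + K) = I ^ (k + N ⟨M, hM⟩) * I ^ e := by rw [← pow_add, add_assoc, ← he]
    _ ≤ (Ideal.span {p ⟨M, hM⟩} * I ^ N ⟨M, hM⟩ ⊔ M * I ^ (k + N ⟨M, hM⟩)) * I ^ e :=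
      Ideal.mul_mono_left (hN ⟨M, hM⟩)
    _ = Ideal.span {p ⟨M, hM⟩} * I ^ K ⊔ M * I ^ (k + K) := by
      rw [Ideal.sup_mul, mul_assoc, mul_assoc, ← pow_add, ← pow_add, add_assoc, ← he]
    _ ≤ (Ideal.span {q} ⊔ M * I ^ k) * I ^ K ⊔ M * I ^ (k + K) := by gcongr
    _ = Ideal.span {q} * I ^ K ⊔ M • I ^ (k + K) := by
      rw [Ideal.sup_mul, mul_assoc, ← pow_add, sup_assoc, sup_idem, smul_eq_mul]

theorem exists_forall_ge_exists_span_pair_pow_le_sup [IsNoetherianRing R] [Ring.KrullDimLE 1 R]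
    {a : R} (ha : a ∈ R⁰) (b : R) (M : Ideal R) [M.IsMaximal] :
    ∃ n : ℕ, ∀ d ≥ n, ∃ p ∈ Ideal.span {a, b} ^ (d + 1), ∃ N,
      Ideal.span {a, b} ^ (d + 1 + N) ≤
        Ideal.span {p} * Ideal.span {a, b} ^ N ⊔ M * Ideal.span {a, b} ^ (d + 1 + N) := by
  obtain ⟨n, hn⟩ := exists_sub_pow_mem_and_pow_mul_sub_pow_mem ha b M
  refine ⟨n, fun d hd => ?_⟩
  obtain ⟨p, e, hp, hpe⟩ := hn d hd
  have hb : Ideal.span {b} ≤ Ideal.span {a, b} := Ideal.span_mono (by simp)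
  have hpa : p - a ^ (d + 1) ∈ Ideal.span {a, b} ^ (d + 1) :=
    pow_succ' (Ideal.span {a, b}) d ▸ Ideal.mul_mono_left hb hp
  refine ⟨p, ?_, e + d, pow_le_span_mul_pow_sup_mul_pow hp hpe⟩
  simpa only [sub_add_cancel] using
    add_mem hpa (Ideal.pow_mem_pow (Ideal.subset_span (Set.mem_insert a {b})) (d + 1))

theorem exists_forall_ge_exists_span_pair_pow_eq [IsNoetherianRing R] [Ring.KrullDimLE 1 R]
    [Finite (MaximalSpectrum R)] {a : R} (ha : a ∈ R⁰) (b : R) :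
    ∃ n : ℕ, ∀ d ≥ n, ∃ p ∈ Ideal.span {a, b} ^ (d + 1), ∃ N,
      Ideal.span {a, b} ^ (d + 1 + N) = Ideal.span {p} * Ideal.span {a, b} ^ N := by
  have := Fintype.ofFinite (MaximalSpectrum R)
  choose n hn using fun M : MaximalSpectrum R =>
    have := M.isMaximal
    exists_forall_ge_exists_span_pair_pow_le_sup ha b M.asIdeal
  refine ⟨Finset.univ.sup n, fun d hd =>
    exists_pow_add_eq_span_mul_pow (IsNoetherian.noetherian _) fun M hM => ?_⟩
  exact hn ⟨M, hM⟩ d ((Finset.le_sup (Finset.mem_univ (⟨M, hM⟩ : MaximalSpectrum R))).trans hd)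

end PrincipalReductions

section StableSubmodules

variable {R Q : Type*} [CommRing R] [CommRing Q] [Algebra R Q] {I : Submodule R Q}

theorem isIntegral_inv_mul_of_span_mul_le {N : Submodule R Q} (hN : N.FG) {u : Q} (hu : u ∈ Q⁰)
    (huN : u ∈ N) {x : Q} {w : Qˣ} (h : (R ∙ x) * N ≤ (R ∙ (w : Q)) * N) :
    IsIntegral R (↑w⁻¹ * x) := by
  refine isIntegral_of_forall_mul_mem hN hu huN fun y hy => ?_
  obtain ⟨z, hz, hwz⟩ := Submodule.mem_span_singleton_mul.mp
    (h (Submodule.mul_mem_mul (Submodule.mem_span_singleton_self x) hy))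
  rwa [mul_assoc, ← hwz, Units.inv_mul_cancel_left]

theorem span_pow_mul_pow_eq {c : Q} {k : ℕ} (hc : (R ∙ c) * I ^ k = I ^ (k + 1)) (j : ℕ) :
    (R ∙ (c ^ j)) * I ^ k = I ^ (j + k) := by
  induction j with
  | zero => rw [pow_zero, ← Submodule.one_eq_span, one_mul, zero_add]
  | succ j ih =>
    rw [pow_succ, ← Set.singleton_mul_singleton, ← Submodule.span_mul_span, mul_assoc, hc,
      pow_succ I k, ← mul_assoc, ih, ← pow_succ, add_right_comm]

theorem span_mul_pow_eq_of_span_mul_pow_eq {p q c : Q} (hc : c * p = q) {d n : ℕ}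
    (hp : (R ∙ p) * I ^ n = I ^ (d + n)) (hq : (R ∙ q) * I ^ n = I ^ (d + 1 + n)) :
    (R ∙ c) * I ^ (d + n) = I ^ (d + n + 1) := by
  rw [← hp, ← mul_assoc, Submodule.span_mul_span, Set.singleton_mul_singleton, hc, hq,
    add_right_comm]

theorem inv_pow_mul_mem_pow {c : Qˣ} {d : ℕ} {x : Q} (hx : x ∈ I ^ d) :
    ↑(c ^ d)⁻¹ * x ∈ ((R ∙ (↑c⁻¹ : Q)) * I) ^ d := by
  rw [mul_pow, Submodule.span_pow, Set.singleton_pow, ← inv_pow, Units.val_pow_eq_pow_val]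
  exact Submodule.mul_mem_mul (Submodule.mem_span_singleton_self _) hx

theorem isUnit_integralClosure_of_isIntegral {w : Qˣ} {x : integralClosure R Q}
    (hx : (x : Q) = w) (hw : IsIntegral R (↑w⁻¹ : Q)) : IsUnit x :=
  .of_mul_eq_one ⟨_, hw⟩ (Subtype.ext (by simp [hx]))

theorem mem_comap_val_pow_of_val_mem_pow {O : Subalgebra R Q} {N : Submodule R Q}
    (hN : N ≤ Subalgebra.toSubmodule O) {d : ℕ} {x : O} (hx : (x : Q) ∈ N ^ d) :
    x ∈ N.comap O.val.toLinearMap ^ d := by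
  have hmap : (N.comap O.val.toLinearMap).map O.val.toLinearMap = N :=
    Submodule.map_comap_eq_of_le fun y hy => ⟨⟨y, hN hy⟩, rfl⟩
  rw [← hmap, ← Submodule.map_pow] at hx
  obtain ⟨y, hy, hyx⟩ := hx
  rwa [← Subtype.ext hyx]

theorem span_inv_mul_le_integralClosure (hI : I.FG) {a : Q} (ha : a ∈ Q⁰) (haI : a ∈ I) {c : Qˣ}
    {k : ℕ} (hc : (R ∙ (c : Q)) * I ^ k = I ^ (k + 1)) :
    (R ∙ (↑c⁻¹ : Q)) * I ≤ Subalgebra.toSubmodule (integralClosure R Q) := by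
  intro y hy
  obtain ⟨x, hx, rfl⟩ := Submodule.mem_span_singleton_mul.mp hy
  refine isIntegral_inv_mul_of_span_mul_le (hI.pow k) (pow_mem ha k)
    (Submodule.pow_mem_pow I haI k) (hc ▸ pow_succ' I k ▸ ?_)
  gcongr
  exact (Submodule.span_singleton_le_iff_mem _ _).mpr hx

theorem exists_isUnit_mem_pow_and_mem_pow_succ (hI : I.FG) {a : Q} (ha : a ∈ Q⁰) (haI : a ∈ I)
    {c p : Qˣ} {k d : ℕ} (hc : (R ∙ (c : Q)) * I ^ k = I ^ (k + 1))
    (hp : (R ∙ (p : Q)) * I ^ k = I ^ (d + k)) (hpI : (p : Q) ∈ I ^ d)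
    (hcpI : ↑(c * p) ∈ I ^ (d + 1)) :
    ∃ w : integralClosure R Q, IsUnit w ∧
      w ∈ ((R ∙ (↑c⁻¹ : Q)) * I).comap (integralClosure R Q).val.toLinearMap ^ d ∧
      w ∈ ((R ∙ (↑c⁻¹ : Q)) * I).comap (integralClosure R Q).val.toLinearMap ^ (d + 1) := by
  have hpc : (R ∙ (p : Q)) * I ^ k = (R ∙ ((c ^ d : Qˣ) : Q)) * I ^ k := by
    rw [Units.val_pow_eq_pow_val, span_pow_mul_pow_eq hc, hp]
  have hakI : a ^ k ∈ I ^ k := Submodule.pow_mem_pow I haI k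
  have hJ := span_inv_mul_le_integralClosure hI ha haI hc
  let w : integralClosure R Q :=
    ⟨↑(c ^ d)⁻¹ * p, isIntegral_inv_mul_of_span_mul_le (hI.pow k) (pow_mem ha k) hakI hpc.le⟩
  refine ⟨w, isUnit_integralClosure_of_isIntegral (w := (c ^ d)⁻¹ * p) rfl ?_,
    mem_comap_val_pow_of_val_mem_pow hJ (inv_pow_mul_mem_pow hpI),
    mem_comap_val_pow_of_val_mem_pow hJ ?_⟩
  · rw [mul_inv, inv_inv, mul_comm]
    exact isIntegral_inv_mul_of_span_mul_le (hI.pow k) (pow_mem ha k) hakI hpc.ge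
  · have hw : (w : Q) = ↑(c ^ (d + 1))⁻¹ * ↑(c * p) := by
      simp only [w, ← Units.val_mul, pow_succ, mul_inv, mul_assoc, inv_mul_cancel_left]
    exact hw ▸ inv_pow_mul_mem_pow hcpI

end StableSubmodules

/-- `R` is *strictly closed* in the `R`-algebra `T` if every `x : T` with `x ⊗ 1 = 1 ⊗ x` in
`T ⊗[R] T` comes from `R`. -/
def IsStrictlyClosedIn (R T : Type*) [CommRing R] [CommRing T] [Algebra R T] : Prop :=
  ∀ x : T, x ⊗ₜ[R] (1 : T) = (1 : T) ⊗ₜ[R] x → x ∈ (algebraMap R T).range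

namespace IsStrictlyClosedIn

variable {R Q : Type*} [CommRing R] [CommRing Q] [Algebra R Q] {I : Submodule R Q}

theorem mem_one_of_span_mul_pow_eq (h : IsStrictlyClosedIn R (integralClosure R Q)) (hI : I.FG)
    (hI1 : I ≤ 1) {a : Q} (ha : a ∈ Q⁰) (haI : a ∈ I) {c p : Qˣ} {k d : ℕ}
    (hc : (R ∙ (c : Q)) * I ^ k = I ^ (k + 1)) (hp : (R ∙ (p : Q)) * I ^ k = I ^ (d + k))
    (hpI : (p : Q) ∈ I ^ d) (hcpI : ↑(c * p) ∈ I ^ (d + 1)) : (c : Q) ∈ (1 : Submodule R Q) := by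
  obtain ⟨w, hw, hwd, hwd'⟩ := exists_isUnit_mem_pow_and_mem_pow_succ hI ha haI hc hp hpI hcpI
  have hcint : IsIntegral R (c : Q) := by
    refine isIntegral_of_forall_mul_mem (hI.pow k) (pow_mem ha k) (Submodule.pow_mem_pow I haI k)
      fun x hx => ?_
    have hIk : I ^ (k + 1) ≤ I ^ k := pow_succ I k ▸ mul_le_of_le_one_right' hI1
    exact hIk (hc ▸ Submodule.mul_mem_mul (Submodule.mem_span_singleton_self _) hx)
  let f : integralClosure R Q →ₐ[R] integralClosure R Q ⊗[R] integralClosure R Q :=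
    Algebra.TensorProduct.includeLeft
  let g : integralClosure R Q →ₐ[R] integralClosure R Q ⊗[R] integralClosure R Q :=
    Algebra.TensorProduct.includeRight
  have hfg : f ⟨c, hcint⟩ = g ⟨c, hcint⟩ := by
    refine map_eq_map_of_isUnit_of_mem_pow (fun j hj => ?_) hw hwd hwd'
    obtain ⟨x, hx, hxj : ↑c⁻¹ * x = j⟩ := Submodule.mem_span_singleton_mul.mp hj
    obtain ⟨r, rfl⟩ := Submodule.mem_one.mp (hI1 hx)
    have hcj : ⟨c, hcint⟩ * j = algebraMap R (integralClosure R Q) r :=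
      Subtype.ext ((Units.inv_mul_eq_iff_eq_mul c).mp hxj).symm
    rw [hcj, AlgHom.commutes, AlgHom.commutes]
  obtain ⟨r, hr⟩ := h ⟨c, hcint⟩ hfg
  exact Submodule.mem_one.mpr ⟨r, congrArg Subtype.val hr⟩

end IsStrictlyClosedIn

section

open IsLocalization

/-- The element `c` of the ideal `I` is *`I`-transversal* (in the sense of Lipman) if it is
invertible in `Q` and every fraction `m / c` with `m ∈ I` is integral over `R`. -/
structure IsTransversal {R : Type*} (Q : Type*) [CommRing R] [CommRing Q] [Algebra R Q]
    (I : Ideal R) (c : R) : Prop where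
  mem : c ∈ I
  isUnit : IsUnit (algebraMap R Q c)
  exists_isIntegral_mul_eq :
    ∀ m ∈ I, ∃ t : Q, IsIntegral R t ∧ algebraMap R Q c * t = algebraMap R Q m

/-- A version of `IsArfRing` relative to an `R`-algebra `Q` that plays the role of the total ring
of fractions, with principal reductions replaced by transversal elements. -/
structure IsArfIn (R Q : Type*) [CommRing R] [CommRing Q] [Algebra R Q] : Prop where
  exists_isTransversal : ∀ I : Ideal R, I.IsIntegrallyClosedIdeal →
    (∃ u ∈ I, IsUnit (algebraMap R Q u)) → ∃ c, IsTransversal Q I c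
  mul_mem_span : ∀ (x y z : R) (s t : Q), IsUnit (algebraMap R Q x) → IsIntegral R s →
    IsIntegral R t → algebraMap R Q x * s = algebraMap R Q y →
    algebraMap R Q x * t = algebraMap R Q z → y * z ∈ Ideal.span {x}

variable {R Q : Type*} [CommRing R] [CommRing Q] [Algebra R Q]

theorem coeSubmodule_pow (I : Ideal R) (n : ℕ) : coeSubmodule Q (I ^ n) = coeSubmodule Q I ^ n :=
  Submodule.map_pow I (Algebra.ofId R Q) n

theorem span_mul_coeSubmodule_pow_eq {I : Ideal R} {p : R} {k n : ℕ}
    (h : I ^ (k + n) = Ideal.span {p} * I ^ n) {m : ℕ} (hm : n ≤ m) :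
    (R ∙ algebraMap R Q p) * coeSubmodule Q I ^ m = coeSubmodule Q I ^ (k + m) := by
  obtain ⟨e, rfl⟩ := Nat.exists_eq_add_of_le hm
  rw [← coeSubmodule_span_singleton, ← coeSubmodule_pow, ← coeSubmodule_pow,
    ← coeSubmodule_mul, pow_add, ← mul_assoc, ← h, ← pow_add, add_assoc]

theorem isUnit_algebraMap_of_pow_eq_span_mul {I : Ideal R} {a p : R} (haI : a ∈ I)
    (ha : IsUnit (algebraMap R Q a)) {J : Ideal R} {k : ℕ} (h : I ^ k = Ideal.span {p} * J) :
    IsUnit (algebraMap R Q p) := by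
  obtain ⟨z, -, hz⟩ := Ideal.mem_span_singleton_mul.mp (h ▸ Ideal.pow_mem_pow haI k)
  refine isUnit_of_mul_isUnit_left (y := algebraMap R Q z) ?_
  rw [← map_mul, hz, map_pow]
  exact ha.pow k

theorem memIdealIntegralClosure_of_span_mul_pow_eq [FaithfulSMul R Q] {I : Ideal R} (hI : I.FG)
    {a : R} (haI : a ∈ I) (ha : IsUnit (algebraMap R Q a)) {c : R} {k : ℕ}
    (hc : (R ∙ algebraMap R Q c) * coeSubmodule Q I ^ k = coeSubmodule Q I ^ (k + 1)) :
    MemIdealIntegralClosure I c := by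
  have hinj : Function.Injective (algebraMap R Q) := FaithfulSMul.algebraMap_injective R Q
  have hfg : (coeSubmodule Q I).FG := (coeSubmodule_fg Q hinj I).mpr hI
  have haI' : algebraMap R Q a ^ k ∈ coeSubmodule Q I ^ k :=
    Submodule.pow_mem_pow _ (Submodule.mem_map_of_mem haI) k
  have hsmul : coeSubmodule Q I ^ (k + 1) ≤ I • coeSubmodule Q I ^ k := by
    rw [pow_succ', Submodule.mul_le]
    rintro _ ⟨r, hr, rfl⟩ y hy
    simpa only [Algebra.linearMap_apply, ← Algebra.smul_def] using Submodule.smul_mem_smul hr hy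
  obtain ⟨p, hp, hcoeff, hroot⟩ := exists_monic_coeff_mem_pow_aeval_eq_zero (hfg.pow k)
    (ha.pow k).mem_nonZeroDivisors haI' I fun x hx =>
      hsmul (hc ▸ Submodule.mul_mem_mul (Submodule.mem_span_singleton_self _) hx)
  rw [Polynomial.aeval_algebraMap_apply, Polynomial.coe_aeval_eq_eval] at hroot
  exact memIdealIntegralClosure_of_eval_eq_zero hp hcoeff
    ((map_eq_zero_iff _ hinj).mp hroot)

end

namespace IsStrictlyClosedIn

open IsLocalization

variable {R Q : Type*} [CommRing R] [CommRing Q] [Algebra R Q]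

theorem exists_isTransversal_span_pair [IsNoetherianRing R] [Ring.KrullDimLE 1 R]
    [Finite (MaximalSpectrum R)] [FaithfulSMul R Q]
    (h : IsStrictlyClosedIn R (integralClosure R Q)) {a : R} (ha : IsUnit (algebraMap R Q a))
    (b : R) :
    ∃ c, MemIdealIntegralClosure (Ideal.span {a, b}) c ∧ IsUnit (algebraMap R Q c) ∧
      ∀ m ∈ Ideal.span {a, b}, ∃ t : Q, IsIntegral R t ∧
        algebraMap R Q c * t = algebraMap R Q m := by
  have hinj : Function.Injective (algebraMap R Q) := FaithfulSMul.algebraMap_injective R Q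
  have haR : a ∈ R⁰ := mem_nonZeroDivisors_of_injective hinj ha.mem_nonZeroDivisors
  set I := Ideal.span {a, b}
  have haI : a ∈ I := Ideal.subset_span (Set.mem_insert a {b})
  have hI : I.FG := IsNoetherian.noetherian I
  obtain ⟨d, hd⟩ := exists_forall_ge_exists_span_pair_pow_eq haR b
  obtain ⟨p, hpI, n, hp⟩ := hd d le_rfl
  obtain ⟨q, hqI, n', hq⟩ := hd (d + 1) (Nat.le_succ d)
  have hpQ := span_mul_coeSubmodule_pow_eq (Q := Q) hp (m := n + n') (by lia)
  have hpQ' := span_mul_coeSubmodule_pow_eq (Q := Q) hp (m := d + 1 + (n + n')) (by lia)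
  have hqQ := span_mul_coeSubmodule_pow_eq (Q := Q) hq (m := n + n') (by lia)
  obtain ⟨up, hup⟩ := isUnit_algebraMap_of_pow_eq_span_mul (Q := Q) haI ha hp
  obtain ⟨uq, huq⟩ := isUnit_algebraMap_of_pow_eq_span_mul (Q := Q) haI ha hq
  rw [← hup] at hpQ hpQ'
  rw [← huq] at hqQ
  set u := uq / up
  have hu := span_mul_pow_eq_of_span_mul_pow_eq (c := (u : Q))
    (by rw [← Units.val_mul, div_mul_cancel]) hpQ hqQ
  have haQ : algebraMap R Q a ∈ coeSubmodule Q I := Submodule.mem_map_of_mem haI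
  have hfg : (coeSubmodule Q I).FG := (coeSubmodule_fg Q hinj I).mpr hI
  have hI1 : coeSubmodule Q I ≤ 1 :=
    Submodule.one_eq_range (R := R) (A := Q) ▸ LinearMap.map_le_range
  obtain ⟨c, hc⟩ := Submodule.mem_one.mp <|
    h.mem_one_of_span_mul_pow_eq hfg hI1 ha.mem_nonZeroDivisors haQ hu hpQ'
      (by rw [hup, ← coeSubmodule_pow]; exact Submodule.mem_map_of_mem hpI)
      (by rw [div_mul_cancel, huq, ← coeSubmodule_pow]; exact Submodule.mem_map_of_mem hqI)
  refine ⟨c, memIdealIntegralClosure_of_span_mul_pow_eq hI haI ha (hc ▸ hu), hc ▸ u.isUnit,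
    fun m hm => ⟨↑u⁻¹ * algebraMap R Q m, ?_, by rw [hc, Units.mul_inv_cancel_left]⟩⟩
  exact span_inv_mul_le_integralClosure hfg ha.mem_nonZeroDivisors haQ hu
    (Submodule.mul_mem_mul (Submodule.mem_span_singleton_self _) (Submodule.mem_map_of_mem hm))

theorem exists_isTransversal [IsNoetherianRing R] [Ring.KrullDimLE 1 R]
    [Finite (MaximalSpectrum R)] [FaithfulSMul R Q]
    (h : IsStrictlyClosedIn R (integralClosure R Q)) {I : Ideal R}
    (hI : I.IsIntegrallyClosedIdeal) {u : R} (huI : u ∈ I) (hu : IsUnit (algebraMap R Q u)) :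
    ∃ c, IsTransversal Q I c := by
  obtain ⟨s, hs⟩ : I.FG := IsNoetherian.noetherian I
  suffices hfin : ∃ c ∈ I, IsUnit (algebraMap R Q c) ∧
      ∀ m ∈ s, ∃ t : Q, IsIntegral R t ∧ algebraMap R Q c * t = algebraMap R Q m by
    obtain ⟨c, hcI, hc, hcs⟩ := hfin
    refine ⟨c, hcI, hc, fun m hm => ?_⟩
    rw [← hs] at hm
    induction hm using Submodule.span_induction with
    | mem m hm => exact hcs m hm
    | zero => exact ⟨0, isIntegral_zero, by simp⟩
    | add m m' _ _ hm hm' =>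
      obtain ⟨⟨t, ht, htm⟩, t', ht', htm'⟩ := hm, hm'
      exact ⟨t + t', ht.add ht', by rw [mul_add, htm, htm', map_add]⟩
    | smul r m _ hm =>
      obtain ⟨t, ht, htm⟩ := hm
      exact ⟨r • t, ht.smul r, by rw [mul_smul_comm, htm, smul_eq_mul, map_mul, Algebra.smul_def]⟩
  replace hs : ∀ m ∈ s, m ∈ I := fun m hm => hs ▸ Ideal.subset_span hm
  induction s using Finset.cons_induction with
  | empty => exact ⟨u, huI, hu, by simp⟩
  | cons b s hb ih =>
    rw [Finset.forall_mem_cons] at hs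
    obtain ⟨c, hcI, hc, hcs⟩ := ih hs.2
    obtain ⟨c', hc'I, hc', hc's⟩ := h.exists_isTransversal_span_pair hc b
    have hle : Ideal.span {c, b} ≤ I := Ideal.span_le.mpr (Set.pair_subset hcI hs.1)
    refine ⟨c', hI.subset (hc'I.mono hle), hc', Finset.forall_mem_cons hb _ |>.mpr
      ⟨hc's b (Ideal.subset_span (by simp)), fun m hm => ?_⟩⟩
    obtain ⟨t, ht, htm⟩ := hcs m hm
    obtain ⟨t', ht', htc⟩ := hc's c (Ideal.subset_span (by simp))
    exact ⟨t' * t, ht'.mul ht, by rw [← mul_assoc, htc, htm]⟩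

theorem mul_mem_span {T : Type*} [CommRing T] [Algebra R T] [FaithfulSMul R T]
    (h : IsStrictlyClosedIn R T) {x y z : R} {s t : T}
    (hxs : algebraMap R T x * s = algebraMap R T y)
    (hxt : algebraMap R T x * t = algebraMap R T z) : y * z ∈ Ideal.span {x} := by
  let f : T →ₐ[R] T ⊗[R] T := Algebra.TensorProduct.includeLeft
  let g : T →ₐ[R] T ⊗[R] T := Algebra.TensorProduct.includeRight
  have hfg : f (algebraMap R T x * s * t) = g (algebraMap R T x * s * t) := by
    have hs := congrArg g hxs
    have hs' := congrArg f hxs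
    have ht := congrArg g hxt
    have ht' := congrArg f hxt
    simp only [map_mul, AlgHom.commutes] at hs hs' ht ht' ⊢
    linear_combination f t * hs' - f t * hs + g s * ht' - g s * ht
  obtain ⟨r, hr⟩ := h _ hfg
  refine Ideal.mem_span_singleton'.mpr ⟨r, FaithfulSMul.algebraMap_injective R T ?_⟩
  rw [map_mul, map_mul, hr, ← hxs, ← hxt]
  ring

theorem isArfIn [IsNoetherianRing R] [Ring.KrullDimLE 1 R] [Finite (MaximalSpectrum R)]
    [FaithfulSMul R Q] (h : IsStrictlyClosedIn R (integralClosure R Q)) : IsArfIn R Q where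
  exists_isTransversal _ hI := fun ⟨_, huI, hu⟩ => h.exists_isTransversal hI huI hu
  mul_mem_span _ _ _ s t _ hs ht hxs hxt :=
    have : FaithfulSMul R (integralClosure R Q) := .tower_bot R _ Q
    h.mul_mem_span (s := ⟨s, hs⟩) (t := ⟨t, ht⟩) (Subtype.ext hxs) (Subtype.ext hxt)

end IsStrictlyClosedIn

section PrincipalReductionIffTransversal

open IsLocalization

variable {R Q : Type*} [CommRing R] [CommRing Q] [Algebra R Q]

theorem exists_pow_succ_eq_pow_of_one_le [IsNoetherianRing R] {J : Submodule R Q} (hJ : J.FG)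
    (h1 : 1 ≤ J) (hJint : J ≤ Subalgebra.toSubmodule (integralClosure R Q)) :
    ∃ n, J ^ (n + 1) = J ^ n := by
  obtain ⟨s, rfl⟩ := hJ
  let A := Algebra.adjoin R (s : Set Q)
  have : Module.Finite R A :=
    Module.Finite.iff_fg.mpr (fg_adjoin_of_finite s.finite_toSet (Submodule.span_le.mp hJint))
  set J := Submodule.span R (s : Set Q)
  let J' := J.comap A.val.toLinearMap
  have hJ' : J'.map A.val.toLinearMap = J :=
    Submodule.map_comap_eq_of_le fun x hx => ⟨⟨x, Algebra.span_le_adjoin R _ hx⟩, rfl⟩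
  have h1' : 1 ≤ J' := Submodule.one_le.mpr (show (1 : Q) ∈ J from Submodule.one_le.mp h1)
  obtain ⟨n, hn⟩ := monotone_stabilizes_iff_noetherian.mpr (inferInstanceAs (IsNoetherian R A))
    ⟨(J' ^ ·), fun _ _ h => pow_le_pow_right' h1' h⟩
  refine ⟨n, ?_⟩
  rw [← hJ', ← Submodule.map_pow, ← Submodule.map_pow]
  exact congrArg _ (hn (n + 1) n.le_succ).symm

theorem isTransversal_of_pow_succ_eq_span_mul_pow [IsNoetherianRing R] [FaithfulSMul R Q]
    {I : Ideal R} {u : R} (huI : u ∈ I) (hu : IsUnit (algebraMap R Q u)) {c : R} (hcI : c ∈ I)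
    {n : ℕ} (h : I ^ (n + 1) = Ideal.span {c} * I ^ n) : IsTransversal Q I c where
  mem := hcI
  isUnit := isUnit_algebraMap_of_pow_eq_span_mul huI hu h
  exists_isIntegral_mul_eq m hm := by
    have hfg : (coeSubmodule Q I).FG :=
      (coeSubmodule_fg Q (FaithfulSMul.algebraMap_injective R Q) I).mpr (IsNoetherian.noetherian I)
    have hI := span_mul_coeSubmodule_pow_eq (Q := Q) (k := 1) (add_comm n 1 ▸ h) le_rfl
    obtain ⟨w, hw⟩ := isUnit_algebraMap_of_pow_eq_span_mul huI hu h
    rw [← hw, add_comm 1] at hI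
    refine ⟨↑w⁻¹ * algebraMap R Q m, ?_, by rw [← hw, Units.mul_inv_cancel_left]⟩
    exact span_inv_mul_le_integralClosure hfg hu.mem_nonZeroDivisors
      (Submodule.mem_map_of_mem huI) hI
      (Submodule.mul_mem_mul (Submodule.mem_span_singleton_self _) (Submodule.mem_map_of_mem hm))

theorem IsTransversal.exists_pow_succ_eq_span_mul_pow [IsNoetherianRing R] [FaithfulSMul R Q]
    {I : Ideal R} {c : R} (h : IsTransversal Q I c) :
    ∃ n, I ^ (n + 1) = Ideal.span {c} * I ^ n := by
  have hinj : Function.Injective (algebraMap R Q) := FaithfulSMul.algebraMap_injective R Q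
  have hfg : (coeSubmodule Q I).FG := (coeSubmodule_fg Q hinj I).mpr (IsNoetherian.noetherian I)
  obtain ⟨w, hw⟩ := h.isUnit
  set J := (R ∙ (↑w⁻¹ : Q)) * coeSubmodule Q I
  have hIJ : coeSubmodule Q I = (R ∙ (w : Q)) * J := by
    rw [← mul_assoc, Submodule.span_mul_span, Set.singleton_mul_singleton, Units.mul_inv,
      ← Submodule.one_eq_span, one_mul]
  have h1 : 1 ≤ J := Submodule.one_le.mpr <| Submodule.mem_span_singleton_mul.mpr
    ⟨w, hw ▸ Submodule.mem_map_of_mem h.mem, w.inv_mul⟩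
  have hJint : J ≤ Subalgebra.toSubmodule (integralClosure R Q) := by
    intro y hy
    obtain ⟨_, ⟨m, hm, rfl⟩, rfl⟩ := Submodule.mem_span_singleton_mul.mp hy
    obtain ⟨t, ht, htm⟩ := h.exists_isIntegral_mul_eq m hm
    rwa [Algebra.linearMap_apply, ← htm, ← hw, Units.inv_mul_cancel_left]
  obtain ⟨n, hn : J ^ (n + 1) = J ^ n⟩ :=
    exists_pow_succ_eq_pow_of_one_le ((Submodule.fg_span_singleton _).mul hfg) h1 hJint
  refine ⟨n, Submodule.map_injective_of_injective (f := Algebra.linearMap R Q) hinj ?_⟩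
  change coeSubmodule Q _ = coeSubmodule Q _
  rw [coeSubmodule_mul, coeSubmodule_span_singleton, coeSubmodule_pow, coeSubmodule_pow, ← hw, hIJ,
    mul_pow _ J, mul_pow _ J, hn, pow_succ', mul_assoc]

end PrincipalReductionIffTransversal

theorem isUnit_algebraMap_iff_mem_nonZeroDivisors {R Q : Type*} [CommRing R] [CommRing Q]
    [Algebra R Q] [IsFractionRing R Q] {x : R} : IsUnit (algebraMap R Q x) ↔ x ∈ R⁰ :=
  ⟨fun h => mem_nonZeroDivisors_of_injective (IsFractionRing.injective R Q) h.mem_nonZeroDivisors,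
    fun h => IsLocalization.map_units Q ⟨x, h⟩⟩

theorem isArfRing_iff_isArfIn (A : Type*) [CommRing A] [IsNoetherianRing A] :
    IsArfRing A ↔ IsArfIn A (FractionRing A) := by
  constructor
  · rintro ⟨hred, hweak⟩
    refine ⟨fun I hI ⟨u, huI, hu⟩ => ?_, fun x y z s t hx hs ht hxs hxt => ?_⟩
    · obtain ⟨n, c, hcI, hc⟩ :=
        hred I hI ⟨u, huI, isUnit_algebraMap_iff_mem_nonZeroDivisors.mp hu⟩
      exact ⟨c, isTransversal_of_pow_succ_eq_span_mul_pow huI hu hcI hc⟩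
    · refine hweak x y z (isUnit_algebraMap_iff_mem_nonZeroDivisors.mp hx) ?_ ?_
      · rwa [IsLocalization.mk'_eq_iff_eq_mul.mpr (by rw [← hxs, mul_comm])]
      · rwa [IsLocalization.mk'_eq_iff_eq_mul.mpr (by rw [← hxt, mul_comm])]
  · rintro ⟨htrans, hweak⟩
    refine ⟨fun I hI ⟨u, huI, hu⟩ => ?_, fun x y z hx hs ht => ?_⟩
    · obtain ⟨c, hc⟩ := htrans I hI ⟨u, huI, isUnit_algebraMap_iff_mem_nonZeroDivisors.mpr hu⟩
      obtain ⟨n, hn⟩ := hc.exists_pow_succ_eq_span_mul_pow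
      exact ⟨n, c, hc.mem, hn⟩
    · exact hweak x y z _ _ (isUnit_algebraMap_iff_mem_nonZeroDivisors.mpr hx) hs ht
        (IsLocalization.mk'_spec' _ y ⟨x, hx⟩) (IsLocalization.mk'_spec' _ z ⟨x, hx⟩)

section IntegralClosureOfIdealsAndFractions

theorem isIntegrallyClosedIdeal_iff {R : Type*} [CommRing R] {I : Ideal R} :
    I.IsIntegrallyClosedIdeal ↔ ∀ r, MemIdealIntegralClosure I r → r ∈ I :=
  ⟨fun h r hr => h.subset hr, fun h => subset_antisymm h fun r hr =>
    ⟨1, one_pos, fun _ => -r, by simpa using hr, by simp⟩⟩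

theorem isIntegrallyClosedIdeal_of_isRadical {R : Type*} [CommRing R] {I : Ideal R}
    (hI : I.IsRadical) : I.IsIntegrallyClosedIdeal := by
  refine isIntegrallyClosedIdeal_iff.mpr fun r ⟨n, _, c, hc, heq⟩ => hI ⟨n, ?_⟩
  rw [eq_neg_of_add_eq_zero_left heq]
  exact I.neg_mem <| I.sum_mem fun i hi => I.mul_mem_right _ <|
    Ideal.pow_le_self (Nat.one_le_iff_ne_zero.mp (Finset.mem_Icc.mp hi).1) (hc i hi)

theorem MemIdealIntegralClosure.map {R S : Type*} [CommRing R] [CommRing S] (f : R →+* S)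
    {I : Ideal R} {r : R} (hr : MemIdealIntegralClosure I r) :
    MemIdealIntegralClosure (I.map f) (f r) := by
  obtain ⟨n, hn, c, hc, heq⟩ := hr
  refine ⟨n, hn, fun i => f (c i), fun i hi => ?_, ?_⟩
  · rw [← Ideal.map_pow]
    exact Ideal.mem_map_of_mem f (hc i hi)
  · simpa only [map_add, map_pow, map_sum, map_mul, map_zero] using congrArg f heq

variable {R Q : Type*} [CommRing R] [CommRing Q] [Algebra R Q]

theorem memIdealIntegralClosure_of_isIntegral_of_mul_eq [FaithfulSMul R Q] {I : Ideal R}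
    {c r : R} (hc : c ∈ I) {t : Q} (ht : IsIntegral R t)
    (h : algebraMap R Q c * t = algebraMap R Q r) : MemIdealIntegralClosure I r := by
  obtain ⟨p, hp, hroot⟩ := ht
  refine memIdealIntegralClosure_of_eval_eq_zero (p := p.scaleRoots c)
    ((Polynomial.monic_scaleRoots_iff c).mpr hp) (fun k => ?_) ?_
  · rw [Polynomial.coeff_scaleRoots, Polynomial.natDegree_scaleRoots]
    exact Ideal.mul_mem_left _ _ (Ideal.pow_mem_pow hc _)
  · refine FaithfulSMul.algebraMap_injective R Q ?_
    rw [map_zero, ← Polynomial.eval₂_at_apply, ← h]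
    exact Polynomial.scaleRoots_eval₂_eq_zero _ hroot

theorem exists_pow_add_sum_eq_zero_of_memIdealIntegralClosure_span_mul {I : Ideal R} {c r : R}
    (hc : IsUnit (algebraMap R Q c)) (hr : MemIdealIntegralClosure (Ideal.span {c} * I) r) {t : Q}
    (ht : algebraMap R Q c * t = algebraMap R Q r) :
    ∃ n, 0 < n ∧ ∃ g : ℕ → R, (∀ i ∈ Finset.Icc 1 n, g i ∈ I ^ i) ∧
      t ^ n + ∑ i ∈ Finset.Icc 1 n, algebraMap R Q (g i) * t ^ (n - i) = 0 := by
  obtain ⟨n, hn, a, ha, heq⟩ := hr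
  have hdiv (i : ℕ) (hi : i ∈ Finset.Icc 1 n) : ∃ g ∈ I ^ i, c ^ i * g = a i := by
    rw [← Ideal.mem_span_singleton_mul, ← Ideal.span_singleton_pow, ← mul_pow]
    exact ha i hi
  choose! g hg hga using hdiv
  refine ⟨n, hn, g, hg, (hc.pow n).mul_left_cancel ?_⟩
  rw [mul_zero, mul_add, ← mul_pow, ht, Finset.mul_sum, ← map_pow, ← (algebraMap R Q).map_zero,
    ← heq, map_add, map_sum]
  refine congrArg _ (Finset.sum_congr rfl fun i hi => ?_)
  rw [← hga i hi, map_mul, map_mul, map_pow, map_pow, ← ht, mul_pow,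
    ← pow_mul_pow_sub _ (Finset.mem_Icc.mp hi).2]
  ring

theorem isIntegral_of_memIdealIntegralClosure_span_mul {I : Ideal R} {c r : R}
    (hc : IsUnit (algebraMap R Q c)) (hr : MemIdealIntegralClosure (Ideal.span {c} * I) r) {t : Q}
    (ht : algebraMap R Q c * t = algebraMap R Q r) : IsIntegral R t := by
  obtain ⟨n, hn, g, -, heq⟩ :=
    exists_pow_add_sum_eq_zero_of_memIdealIntegralClosure_span_mul hc hr ht
  have hdeg : (∑ i ∈ Finset.Icc 1 n, Polynomial.C (g i) * .X ^ (n - i)).degree < n :=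
    Polynomial.mem_degreeLT.mp <| Submodule.sum_mem _ fun i hi => Polynomial.mem_degreeLT.mpr <|
      (Polynomial.degree_C_mul_X_pow_le _ _).trans_lt <|
        Nat.cast_lt.mpr <| Nat.sub_lt hn (Finset.mem_Icc.mp hi).1
  refine ⟨_, Polynomial.monic_X_pow_add hdeg, ?_⟩
  simpa only [Polynomial.eval₂_add, Polynomial.eval₂_X_pow, Polynomial.eval₂_finsetSum,
    Polynomial.eval₂_mul, Polynomial.eval₂_C] using heq

theorem memIdealIntegralClosure_of_memIdealIntegralClosure_span_mul [FaithfulSMul R Q]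
    {I : Ideal R} {c r : R} (hc : IsUnit (algebraMap R Q c))
    (hr : MemIdealIntegralClosure (Ideal.span {c} * I) (c * r)) : MemIdealIntegralClosure I r := by
  obtain ⟨n, hn, g, hg, heq⟩ :=
    exists_pow_add_sum_eq_zero_of_memIdealIntegralClosure_span_mul hc hr
      (map_mul (algebraMap R Q) c r).symm
  refine ⟨n, hn, g, hg, FaithfulSMul.algebraMap_injective R Q ?_⟩
  simpa only [map_add, map_pow, map_sum, map_mul, map_zero] using heq

end IntegralClosureOfIdealsAndFractions

namespace IsArfIn

variable {R Q : Type*} [CommRing R] [CommRing Q] [Algebra R Q]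

/-- The integral fractions with denominator `c`, which condition `mul_mem_span` makes a ring. If `c`
is transversal in an integrally closed ideal `I`, this is the ring `⋃ₙ (Iⁿ : Iⁿ)` obtained by
blowing up `I`. -/
def blowup (h : IsArfIn R Q) {c : R} (hc : IsUnit (algebraMap R Q c)) : Subalgebra R Q where
  carrier := {q | IsIntegral R q ∧ ∃ r, algebraMap R Q c * q = algebraMap R Q r}
  mul_mem' := by
    rintro a b ⟨ha, y, hy⟩ ⟨hb, z, hz⟩
    obtain ⟨r, hr⟩ := Ideal.mem_span_singleton'.mp (h.mul_mem_span c y z a b hc ha hb hy hz)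
    refine ⟨ha.mul hb, r, hc.mul_left_cancel ?_⟩
    rw [← map_mul, mul_comm c r, hr, map_mul, ← hy, ← hz]
    ring
  add_mem' := by
    rintro a b ⟨ha, y, hy⟩ ⟨hb, z, hz⟩
    exact ⟨ha.add hb, y + z, by rw [mul_add, hy, hz, map_add]⟩
  algebraMap_mem' r := ⟨isIntegral_algebraMap, c * r, (map_mul _ _ _).symm⟩

variable (h : IsArfIn R Q) {c : R} (hc : IsUnit (algebraMap R Q c))

theorem exists_mem_mul_eq_of_mem_blowup [FaithfulSMul R Q] {I : Ideal R}
    (hI : I.IsIntegrallyClosedIdeal) (hcI : c ∈ I) {q : Q} (hq : q ∈ h.blowup hc) :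
    ∃ m ∈ I, algebraMap R Q c * q = algebraMap R Q m := by
  obtain ⟨hq, m, hm⟩ := hq
  exact ⟨m, hI.subset (memIdealIntegralClosure_of_isIntegral_of_mul_eq hcI hq hm), hm⟩

instance : Algebra.IsIntegral R (h.blowup hc) where
  isIntegral q := (isIntegral_algHom_iff (h.blowup hc).val Subtype.val_injective).mp q.2.1

theorem isNoetherianRing_blowup [IsNoetherianRing R] : IsNoetherianRing (h.blowup hc) := by
  have hle : Subalgebra.toSubmodule (h.blowup hc) ≤ R ∙ (↑hc.unit⁻¹ : Q) := by
    rintro q ⟨-, r, hr⟩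
    refine Submodule.mem_span_singleton.mpr ⟨r, ?_⟩
    rw [Algebra.smul_def, ← hr, mul_comm, ← mul_assoc, hc.val_inv_mul, one_mul]
  have : IsNoetherian R (h.blowup hc) := isNoetherian_of_le hle
  exact isNoetherian_of_tower R this

theorem isIntegrallyClosedIdeal_comap_span_mul [FaithfulSMul R Q]
    {I : Ideal (h.blowup hc)} (hI : I.IsIntegrallyClosedIdeal) :
    ((Ideal.span {algebraMap R _ c} * I).comap
      (algebraMap R (h.blowup hc))).IsIntegrallyClosedIdeal := by
  refine isIntegrallyClosedIdeal_iff.mpr fun r hr => ?_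
  replace hr : MemIdealIntegralClosure (Ideal.span {algebraMap R _ c} * I)
    (algebraMap R (h.blowup hc) r) := (hr.map _).mono Ideal.map_comap_le
  have hcB : IsUnit (algebraMap (h.blowup hc) Q (algebraMap R _ c)) := hc
  have ht : algebraMap R Q c * (↑hc.unit⁻¹ * algebraMap R Q r) = algebraMap R Q r := by
    rw [← mul_assoc, hc.mul_val_inv, one_mul]
  have htint := isIntegral_of_memIdealIntegralClosure_span_mul hcB hr ht
  let t : h.blowup hc := ⟨_, isIntegral_trans _ htint, r, ht⟩
  have htr : algebraMap R _ c * t = algebraMap R _ r := Subtype.ext ht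
  rw [← htr] at hr
  exact Ideal.mem_comap.mpr <| Ideal.mem_span_singleton_mul.mpr ⟨t, hI.subset
    (memIdealIntegralClosure_of_memIdealIntegralClosure_span_mul hcB hr), htr⟩

theorem isArfIn_blowup [FaithfulSMul R Q] : IsArfIn (h.blowup hc) Q where
  exists_isTransversal I hI := by
    rintro ⟨u, huI, hu⟩
    have hcomap (i : h.blowup hc) (hi : i ∈ I) : ∃ r,
        r ∈ (Ideal.span {algebraMap R _ c} * I).comap (algebraMap R (h.blowup hc)) ∧
        algebraMap R Q c * i = algebraMap R Q r := by
      obtain ⟨r, hr⟩ := i.2.2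
      exact ⟨r, Ideal.mem_span_singleton_mul.mpr ⟨i, hi, Subtype.ext hr⟩, hr⟩
    obtain ⟨v, hv, hvu⟩ := hcomap u huI
    obtain ⟨d, hdI, hd, hdiv⟩ := h.exists_isTransversal _
      (h.isIntegrallyClosedIdeal_comap_span_mul hc hI) ⟨v, hv, hvu ▸ hc.mul hu⟩
    obtain ⟨i, hi, hid⟩ := Ideal.mem_span_singleton_mul.mp hdI
    replace hid : algebraMap R Q c * i = algebraMap R Q d := congrArg Subtype.val hid
    refine ⟨i, hi, isUnit_of_mul_isUnit_right (hid ▸ hd), fun m hm => ?_⟩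
    obtain ⟨r, hr, hmr⟩ := hcomap m hm
    obtain ⟨t, ht, htr⟩ := hdiv r hr
    refine ⟨t, ht.tower_top, hc.mul_left_cancel ?_⟩
    change algebraMap R Q c * ((i : Q) * t) = algebraMap R Q c * m
    rw [hmr, ← htr, ← hid, mul_assoc]
  mul_mem_span x y z s t hx hs ht hxs hxt := by
    obtain ⟨hxint, x', hx'⟩ := x.2
    obtain ⟨-, y', hy'⟩ := y.2
    obtain ⟨-, z', hz'⟩ := z.2
    replace hx : IsUnit (x : Q) := hx
    replace hxs : (x : Q) * s = y := hxs
    replace hxt : (x : Q) * t = z := hxt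
    replace hs := isIntegral_trans (R := R) _ hs
    replace ht := isIntegral_trans (R := R) _ ht
    obtain ⟨r, hr⟩ := Ideal.mem_span_singleton'.mp <| h.mul_mem_span x' y' z' s t
      (hx' ▸ hc.mul hx) hs ht (by rw [← hx', ← hy', ← hxs, mul_assoc])
      (by rw [← hx', ← hz', ← hxt, mul_assoc])
    have hq : algebraMap R Q c * (x * s * t) = algebraMap R Q r := by
      refine (hc.mul hx).mul_left_cancel ?_
      have hxyz : algebraMap R Q r * (algebraMap R Q c * x) =
          (algebraMap R Q c * y) * (algebraMap R Q c * z) := by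
        rw [hx', hy', hz', ← map_mul, hr, map_mul]
      rw [mul_comm _ (algebraMap R Q r), hxyz, ← hxs, ← hxt]
      ring
    refine Ideal.mem_span_singleton'.mpr ⟨⟨_, (hxint.mul hs).mul ht, r, hq⟩, Subtype.ext ?_⟩
    change (x : Q) * s * t * x = y * z
    rw [← hxs, ← hxt]
    ring

end IsArfIn

section ResidueField

variable {R : Type*} [CommRing R] (M : Ideal R) [M.IsMaximal]

theorem exists_sub_algebraMap_mem_map_of_tmul_one_eq {T : Type*} [CommRing T] [Algebra R T]
    (hM : M.map (algebraMap R T) ≠ ⊤) {x : T} (hx : x ⊗ₜ[R] (1 : T) = 1 ⊗ₜ[R] x) :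
    ∃ a : R, x - algebraMap R T a ∈ M.map (algebraMap R T) := by
  let _ : Field (R ⧸ M) := Ideal.Quotient.field M
  let V := T ⧸ M.map (algebraMap R T)
  have : Nontrivial V := Ideal.Quotient.nontrivial_iff.mpr hM
  let f : T →ₐ[R] V := Ideal.Quotient.mkₐ R _
  have hfx : f x ⊗ₜ[R ⧸ M] (1 : V) = 1 ⊗ₜ[R ⧸ M] f x := by
    simpa using congrArg (TensorProduct.mapOfCompatibleSMul (R ⧸ M) R R V V ∘
      TensorProduct.map f.toLinearMap f.toLinearMap) hx
  obtain ⟨a, ha⟩ := (Algebra.IsEffective.of_faithfullyFlat (R ⧸ M) V (f x)).mp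
    (by rwa [Algebra.TensorProduct.includeLeftSubRight_apply, sub_eq_zero])
  obtain ⟨a, rfl⟩ := Ideal.Quotient.mk_surjective a
  exact ⟨a, Ideal.Quotient.eq.mp ha.symm⟩

theorem exists_span_sup_smul_top_eq_top {N : Type*} [AddCommGroup N] [Module R N]
    [Module.Finite R N] : ∃ (n : ℕ) (e : Fin n → N),
      Submodule.span R (Set.range e) ⊔ M • ⊤ = ⊤ ∧
        ∀ r : Fin n → R, ∑ i, r i • e i ∈ (M • ⊤ : Submodule R N) → ∀ i, r i ∈ M := by
  let _ : Field (R ⧸ M) := Ideal.Quotient.field M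
  let b := Module.finBasis (R ⧸ M) (N ⧸ (M • ⊤ : Submodule R N))
  choose e he using fun i => Submodule.mkQ_surjective _ (b i)
  refine ⟨_, e, ?_, fun r hr i => ?_⟩
  · have h : (Submodule.span (R ⧸ M) (Set.range b)).restrictScalars R =
        (Submodule.span R (Set.range e)).map (M • ⊤ : Submodule R N).mkQ := by
      rw [Submodule.restrictScalars_span R (R ⧸ M) Ideal.Quotient.mk_surjective,
        Submodule.map_span, ← Set.range_comp]
      exact congrArg (Submodule.span R <| Set.range ·) (funext fun i => (he i).symm)
    rw [b.span_eq, Submodule.restrictScalars_top] at h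
    rw [sup_comm, ← Submodule.comap_map_mkQ, ← h, Submodule.comap_top]
  · rw [← Submodule.Quotient.mk_eq_zero, ← Submodule.mkQ_apply, map_sum] at hr
    simp only [map_smul, he] at hr
    exact Ideal.Quotient.eq_zero_iff_mem.mp <| Fintype.linearIndependent_iff.mp
      b.linearIndependent (fun i => Ideal.Quotient.mk M (r i)) hr i

end ResidueField

section

variable {R S N N₁ E : Type*} [CommRing R] [CommRing S] [Algebra R S]
  [AddCommGroup N] [Module R N] [AddCommGroup N₁] [Module R N₁] [Module S N₁]
  [IsScalarTower R S N₁] [AddCommGroup E] [Module R E] [Module S E] [IsScalarTower R S E]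

theorem sum_tmul_eq_zero_of_smul_top_le_span {M : Ideal R} [M.IsMaximal] [Module.Finite R N]
    {c : S} (hcN : IsSMulRegular N₁ c) (hcE : IsSMulRegular E c)
    (hc : ∀ m ∈ M, ∃ b : S, algebraMap R S m = c * b) (j : N →ₗ[R] N₁)
    {ι : Type*} [Fintype ι] {s : ι → N} (hs : ∀ l, s l ∈ (M • ⊤ : Submodule R N))
    (hspan : M • ⊤ ≤ Submodule.span R (Set.range s)) {z : ι → N₁}
    (hsz : ∀ l, j (s l) = c • z l) {w : ι → E} (h : ∑ l, s l ⊗ₜ[R] w l = 0) :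
    ∑ l, z l ⊗ₜ[S] w l = 0 := by
  obtain ⟨n, e, he, heM⟩ := exists_span_sup_smul_top_eq_top M (N := N)
  obtain ⟨k, a, y, hy, ha⟩ := TensorProduct.vanishesTrivially_of_sum_tmul_eq_zero R
    (m := Sum.elim e s) (n := Sum.elim 0 w) (by
      rw [Set.Sum.elim_range, Submodule.span_union, eq_top_iff, ← he]
      exact sup_le_sup_left hspan _) (by simpa using h)
  simp only [Fintype.sum_sum_type, Sum.elim_inl, Sum.elim_inr, Sum.forall, Pi.zero_apply] at hy ha
  have haM (q : Fin k) : ∀ i, a (.inl i) q ∈ M := by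
    refine heM _ ?_
    rw [eq_neg_of_add_eq_zero_left (ha q)]
    exact neg_mem (sum_mem fun l _ => Submodule.smul_mem _ _ (hs l))
  choose b hb using fun i q => hc _ (haM q i)
  have hbe (q : Fin k) : ∑ l, a (.inr l) q • z l = - ∑ i, b i q • j (e i) := by
    refine hcN ?_
    simp only [smul_neg, Finset.smul_sum, smul_algebra_smul_comm (R := R) (A := S), ← hsz,
      smul_smul, ← hb, algebraMap_smul, ← map_smul, ← map_sum, ← map_neg]
    exact congrArg j (eq_neg_of_add_eq_zero_right (ha q))
  have hby (i : Fin n) : ∑ q, b i q • y q = 0 := by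
    refine hcE ?_
    simp only [smul_zero, Finset.smul_sum, smul_smul, ← hb, algebraMap_smul, ← hy.1 i]
  calc ∑ l, z l ⊗ₜ[S] w l = ∑ q, (∑ l, a (.inr l) q • z l) ⊗ₜ[S] y q := by
        simp only [hy.2, TensorProduct.tmul_sum, TensorProduct.sum_tmul, TensorProduct.smul_tmul]
        rw [Finset.sum_comm]
    _ = - ∑ i, j (e i) ⊗ₜ[S] ∑ q, b i q • y q := by
        simp only [hbe, TensorProduct.tmul_sum, TensorProduct.sum_tmul, TensorProduct.neg_tmul,
          TensorProduct.smul_tmul, Finset.sum_neg_distrib]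
        rw [Finset.sum_comm]
    _ = 0 := by simp only [hby, TensorProduct.tmul_zero, Finset.sum_const_zero, neg_zero]

theorem sum_tmul_eq_zero_of_mem_smul_top [IsNoetherianRing R] {M : Ideal R} [M.IsMaximal]
    [Module.Finite R N] {c : S} (hcN : IsSMulRegular N₁ c) (hcE : IsSMulRegular E c)
    (hc : ∀ m ∈ M, ∃ b : S, algebraMap R S m = c * b) (j : N →ₗ[R] N₁)
    {ι : Type*} [Fintype ι] {s : ι → N} (hs : ∀ l, s l ∈ (M • ⊤ : Submodule R N)) {z : ι → N₁}
    (hsz : ∀ l, j (s l) = c • z l) {w : ι → E} (h : ∑ l, s l ⊗ₜ[R] w l = 0) :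
    ∑ l, z l ⊗ₜ[S] w l = 0 := by
  obtain ⟨n, g, hg⟩ := Submodule.fg_iff_exists_fin_generating_family.mp
    (IsNoetherian.noetherian (M • ⊤ : Submodule R N))
  have hgM (i : Fin n) : g i ∈ (M • ⊤ : Submodule R N) := hg ▸ Submodule.subset_span ⟨i, rfl⟩
  have hdiv : ∀ y ∈ (M • ⊤ : Submodule R N), ∃ z : N₁, j y = c • z := by
    intro y hy
    induction hy using Submodule.smul_induction_on' with
    | smul m hm y _ =>
      obtain ⟨b, hb⟩ := hc m hm
      exact ⟨b • j y, by rw [map_smul, ← algebraMap_smul S m, hb, mul_smul]⟩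
    | add y _ y' _ hy hy' =>
      obtain ⟨⟨z, hz⟩, z', hz'⟩ := hy, hy'
      exact ⟨z + z', by rw [map_add, hz, hz', smul_add]⟩
  choose z' hz' using fun i => hdiv (g i) (hgM i)
  have := sum_tmul_eq_zero_of_smul_top_le_span hcN hcE hc j (s := Sum.elim g s)
    (z := Sum.elim z' z) (w := Sum.elim 0 w) (Sum.forall.mpr ⟨hgM, hs⟩)
    (by rw [Set.Sum.elim_range, Submodule.span_union, hg]; exact le_sup_left)
    (Sum.forall.mpr ⟨hz', hsz⟩) (by simpa using h)
  simpa using this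

end

theorem tmul_one_eq_of_mul_eq {R S T T₁ : Type*} [CommRing R] [IsNoetherianRing R] [CommRing S]
    [CommRing T] [CommRing T₁] [Algebra R S] [Algebra R T] [Module.Finite R T] [Algebra R T₁]
    [Algebra S T₁] [IsScalarTower R S T₁] {M : Ideal R} [M.IsMaximal] {c : S}
    (hreg : IsSMulRegular T₁ c) (hc : ∀ m ∈ M, ∃ b : S, algebraMap R S m = c * b)
    (f : T →ₐ[R] T₁) {x : T} (hxM : x ∈ M.map (algebraMap R T))
    (hx : x ⊗ₜ[R] (1 : T) = 1 ⊗ₜ[R] x) {z : T₁} (hz : f x = c • z) :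
    z ⊗ₜ[S] (1 : T₁) = 1 ⊗ₜ[S] z := by
  obtain ⟨n, t, ht⟩ := Module.Finite.exists_fin (R := R) (M := T)
  have hxM' : x ∈ M • Submodule.span R (Set.range t) := by rwa [ht, Ideal.smul_top_eq_map]
  obtain ⟨m, hm, hmx⟩ := Submodule.mem_ideal_smul_span_iff_exists_sum _ _ _ |>.mp hxM'
  rw [Finsupp.sum_fintype _ _ fun k => zero_smul R (t k)] at hmx
  choose b hb using fun k => hc (m k) (hm k)
  have hbt : ∑ k, b k • f (t k) = z := hreg <| by
    simp only [Finset.smul_sum, smul_smul, ← hb, algebraMap_smul, ← map_smul, ← map_sum, hmx, hz]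
  have hsum : ∑ l : Option (Fin n), l.elim x (fun k => -(m k • 1)) ⊗ₜ[R]
      l.elim (1 : T₁) (fun k => f (t k)) = 0 := by
    have h := congrArg (TensorProduct.map (.id : T →ₗ[R] T) f.toLinearMap) hx
    simp only [TensorProduct.map_tmul, LinearMap.id_apply, AlgHom.toLinearMap_apply, map_one] at h
    simp only [Fintype.sum_option, Option.elim_none, Option.elim_some, TensorProduct.neg_tmul,
      TensorProduct.smul_tmul, ← TensorProduct.tmul_sum, Finset.sum_neg_distrib, ← map_smul,
      ← map_sum, hmx, h, add_neg_cancel]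
  have key := sum_tmul_eq_zero_of_mem_smul_top hreg hreg hc f.toLinearMap
    (z := fun l : Option (Fin n) => l.elim z fun k => -(b k • 1))
    (Option.forall.mpr ⟨by rwa [Ideal.smul_top_eq_map], fun k =>
      neg_mem (Submodule.smul_mem_smul (hm k) Submodule.mem_top)⟩)
    (Option.forall.mpr ⟨hz, fun k => by simp [smul_smul, ← hb]⟩) hsum
  simp only [Fintype.sum_option, Option.elim_none, Option.elim_some, TensorProduct.neg_tmul,
    TensorProduct.smul_tmul, ← TensorProduct.tmul_sum, Finset.sum_neg_distrib, hbt] at key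
  exact eq_of_add_neg_eq_zero key

namespace IsArfIn

variable {R Q : Type*} [CommRing R] [CommRing Q] [Algebra R Q] (h : IsArfIn R Q) {c : R}
  (hc : IsUnit (algebraMap R Q c)) (T : Subalgebra R Q)

/-- The extension to `h.blowup hc` of a subalgebra `T`: for `c` transversal in an integrally closed
ideal `I`, its elements are the fractions `x / c` with `x ∈ I T`. -/
abbrev blowupAlgebra : Subalgebra (h.blowup hc) Q :=
  Algebra.adjoin (h.blowup hc) T

theorem blowupAlgebra_toSubmodule :
    Subalgebra.toSubmodule (h.blowupAlgebra hc T) = Submodule.span (h.blowup hc) (T : Set Q) := by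
  refine Algebra.adjoin_eq_span_of_subset _ ?_
  exact (Submonoid.closure_eq T.toSubmonoid).symm ▸ Submodule.subset_span

variable {T}

theorem finite_blowupAlgebra [Module.Finite R T] :
    Module.Finite (h.blowup hc) (h.blowupAlgebra hc T) := by
  have hT : (Subalgebra.toSubmodule T).FG := Module.Finite.iff_fg.mp ‹Module.Finite R T›
  obtain ⟨s, hs⟩ := hT
  suffices (Subalgebra.toSubmodule (h.blowupAlgebra hc T)).FG from Module.Finite.iff_fg.mpr this
  refine ⟨s, ?_⟩
  rw [blowupAlgebra_toSubmodule, ← Submodule.span_span_of_tower R, hs]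
  rfl

theorem isIntegral_of_mem_blowupAlgebra [Algebra.IsIntegral R T] {q : Q}
    (hq : q ∈ h.blowupAlgebra hc T) : IsIntegral R q := by
  have hT : h.blowupAlgebra hc T ≤ integralClosure (h.blowup hc) Q :=
    Algebra.adjoin_le fun t ht =>
      ((Algebra.IsIntegral.isIntegral (R := R) (⟨t, ht⟩ : T)).map T.val).tower_top
  exact isIntegral_trans q (hT hq)

theorem mul_mem_smul_of_mem_blowupAlgebra [FaithfulSMul R Q] {I : Ideal R}
    (hI : I.IsIntegrallyClosedIdeal) (hcI : c ∈ I) {q : Q} (hq : q ∈ h.blowupAlgebra hc T) :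
    algebraMap R Q c * q ∈ I • Subalgebra.toSubmodule T := by
  rw [← Subalgebra.mem_toSubmodule, blowupAlgebra_toSubmodule] at hq
  suffices hb : ∀ b ∈ h.blowup hc, algebraMap R Q c * (b * q) ∈ I • Subalgebra.toSubmodule T by
    simpa using hb 1 (one_mem _)
  induction hq using Submodule.span_induction with
  | mem t ht =>
    intro b hb
    obtain ⟨m, hm, hbm⟩ := h.exists_mem_mul_eq_of_mem_blowup hc hI hcI hb
    rw [← mul_assoc, hbm, ← Algebra.smul_def]
    exact Submodule.smul_mem_smul hm ht
  | zero => simp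
  | add q q' _ _ hq hq' =>
    intro b hb
    simpa only [mul_add] using add_mem (hq b hb) (hq' b hb)
  | smul b' q _ hq =>
    intro b hb
    rw [Subalgebra.smul_def, smul_eq_mul, ← mul_assoc b]
    exact hq _ (mul_mem hb b'.2)

theorem exists_mem_blowupAlgebra_mul_eq {I : Ideal R} (hcI : IsTransversal Q I c) {x : Q}
    (hx : x ∈ I • Subalgebra.toSubmodule T) :
    ∃ z ∈ h.blowupAlgebra hc T, algebraMap R Q c * z = x := by
  induction hx using Submodule.smul_induction_on' with
  | smul m hm t ht =>
    obtain ⟨b, hb, hbm⟩ := hcI.exists_isIntegral_mul_eq m hm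
    refine ⟨b * t, mul_mem ?_ (Algebra.subset_adjoin ht), by
      rw [← mul_assoc, hbm, Algebra.smul_def]⟩
    exact Subalgebra.algebraMap_mem (h.blowupAlgebra hc T) ⟨b, hb, m, hbm⟩
  | add x _ y _ hx hy =>
    obtain ⟨⟨z, hz, rfl⟩, z', hz', rfl⟩ := hx, hy
    exact ⟨z + z', add_mem hz hz', mul_add _ _ _⟩

end IsArfIn

theorem exists_isMaximal_annihilator_le_smul_top_ne_top (R N : Type*) [CommRing R]
    [AddCommGroup N] [Module R N] [Module.Finite R N] [Nontrivial N] :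
    ∃ M : Ideal R, M.IsMaximal ∧ Module.annihilator R N ≤ M ∧
      M • (⊤ : Submodule R N) ≠ ⊤ := by
  obtain ⟨M, hM, hle⟩ := Ideal.exists_le_maximal (Module.annihilator R N)
    (mt Module.annihilator_eq_top_iff.mp (not_subsingleton N))
  refine ⟨M, hM, hle, fun htop => hM.ne_top ((Ideal.eq_top_iff_one M).mpr ?_)⟩
  obtain ⟨r, hr, hrN⟩ := Submodule.exists_sub_one_mem_and_smul_eq_zero_of_fg_of_le_smul M ⊤
    Module.Finite.fg_top htop.ge
  rw [← sub_sub_cancel r 1]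
  exact sub_mem (hle (Module.mem_annihilator.mpr fun n => hrN n trivial)) hr

theorem length_quotient_le_of_range_le_of_ker_le {R S N P : Type*} [CommRing R] [CommRing S]
    [Algebra R S] [AddCommGroup N] [Module R N] [Module S N] [IsScalarTower R S N]
    [AddCommGroup P] [Module R P] (f : N →ₗ[R] P) {K : Submodule S N} {L : Submodule R P}
    (hker : LinearMap.ker f ≤ K.restrictScalars R) (hrange : LinearMap.range f ≤ L) :
    Module.length S (N ⧸ K) ≤ Module.length R L :=
  calc Module.length S (N ⧸ K)
    _ ≤ Module.length R (N ⧸ K) :=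
      Module.length_top.symm.trans_le <|
        (Submodule.length_le_length_restrictScalars R ⊤).trans_eq Module.length_top
    _ = Module.length R (N ⧸ K.restrictScalars R) :=
      (Submodule.Quotient.restrictScalarsEquiv R K).length_eq.symm
    _ ≤ Module.length R (N ⧸ LinearMap.ker f) :=
      Module.length_le_of_surjective (Submodule.factor hker) (Submodule.factor_surjective hker)
    _ = Module.length R (LinearMap.range f) := f.quotKerEquivRange.length_eq
    _ ≤ Module.length R L :=
      Module.length_le_of_injective (Submodule.inclusion hrange)
        (Submodule.inclusion_injective hrange)

namespace IsArfIn

variable {R Q : Type*} [CommRing R] [CommRing Q] [Algebra R Q] [FaithfulSMul R Q] (h : IsArfIn R Q)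
  {c : R} (hc : IsUnit (algebraMap R Q c)) (T : Subalgebra R Q)

theorem length_blowupAlgebra_quotient_one_le [Algebra.IsIntegral R T] {I : Ideal R}
    (hI : I.IsIntegrallyClosedIdeal) (hcI : c ∈ I) :
    Module.length (h.blowup hc)
        (h.blowupAlgebra hc T ⧸ (1 : Submodule (h.blowup hc) (h.blowupAlgebra hc T))) ≤
      Module.length R (I • ⊤ : Submodule R (T ⧸ (1 : Submodule R T))) := by
  have hmem (q : h.blowupAlgebra hc T) : algebraMap R Q c * q ∈ I • Subalgebra.toSubmodule T :=
    h.mul_mem_smul_of_mem_blowupAlgebra hc hI hcI q.2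
  let mulLeft : h.blowupAlgebra hc T →ₗ[R] T :=
    (LinearMap.mulLeft R (algebraMap R Q c) ∘ₗ
      ((h.blowupAlgebra hc T).val.restrictScalars R).toLinearMap).codRestrict
      (Subalgebra.toSubmodule T) fun q => Submodule.smul_le_right (hmem q)
  refine length_quotient_le_of_range_le_of_ker_le ((1 : Submodule R T).mkQ ∘ₗ mulLeft) ?_ ?_
  · intro q hq
    obtain ⟨r, hr⟩ := Submodule.mem_one.mp ((Submodule.Quotient.mk_eq_zero _).mp hq)
    have hqB : (q : Q) ∈ h.blowup hc :=
      ⟨h.isIntegral_of_mem_blowupAlgebra hc q.2, r, (congrArg Subtype.val hr).symm⟩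
    exact Submodule.mem_one.mpr ⟨⟨q, hqB⟩, rfl⟩
  · rintro _ ⟨q, rfl⟩
    have hq : mulLeft q ∈ I • (⊤ : Submodule R T) :=
      (Submodule.mem_smul_top_iff I (Subalgebra.toSubmodule T) (mulLeft q)).mpr (hmem q)
    rw [← Submodule.range_mkQ, ← Submodule.map_top, ← Submodule.map_smul'']
    exact ⟨_, hq, rfl⟩

end IsArfIn

theorem mem_annihilator_quotient_one_iff {R T : Type*} [CommRing R] [CommRing T] [Algebra R T]
    {a : R} : a ∈ Module.annihilator R (T ⧸ (1 : Submodule R T)) ↔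
      ∀ t : T, ∃ r, algebraMap R T r = a • t := by
  simp only [Submodule.annihilator_quotient, Submodule.mem_colon, Set.mem_univ,
    forall_const, Submodule.mem_one]

theorem map_ne_top_of_smul_top_quotient_ne_top {R T : Type*} [CommRing R] [CommRing T]
    [Algebra R T] {I : Ideal R} {N : Submodule R T} (hI : I • (⊤ : Submodule R (T ⧸ N)) ≠ ⊤) :
    I.map (algebraMap R T) ≠ ⊤ := by
  contrapose! hI
  rw [← Submodule.range_mkQ, ← Submodule.map_top, ← Submodule.map_smul'', Ideal.smul_top_eq_map,
    hI, Submodule.restrictScalars_top]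

theorem isStrictlyClosedIn_of_subsingleton_quotient_one {R T : Type*} [CommRing R] [CommRing T]
    [Algebra R T] [h : Subsingleton (T ⧸ (1 : Submodule R T))] : IsStrictlyClosedIn R T :=
  fun _ _ => Submodule.mem_one.mp <| Submodule.Quotient.subsingleton_iff.mp h ▸ trivial

namespace IsArfIn

variable {R Q : Type*} [CommRing R] [CommRing Q] [Algebra R Q] (h : IsArfIn R Q) {c : R}
  (hc : IsUnit (algebraMap R Q c)) {T : Subalgebra R Q}

instance : FaithfulSMul (h.blowup hc) Q :=
  (faithfulSMul_iff_algebraMap_injective _ _).mpr Subtype.val_injective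

theorem algebraMap_mem_annihilator_blowupAlgebra_quotient_one [FaithfulSMul R Q]
    [Algebra.IsIntegral R T] {I : Ideal R} (hI : I.IsIntegrallyClosedIdeal) (hcI : c ∈ I) {u : R}
    (hu : u ∈ Module.annihilator R (T ⧸ (1 : Submodule R T))) :
    algebraMap R (h.blowup hc) u ∈ Module.annihilator (h.blowup hc)
      (h.blowupAlgebra hc T ⧸ (1 : Submodule (h.blowup hc) (h.blowupAlgebra hc T))) := by
  refine mem_annihilator_quotient_one_iff.mpr fun q => ?_
  have hcq : algebraMap R Q c * q ∈ T :=
    Submodule.smul_le_right (h.mul_mem_smul_of_mem_blowupAlgebra hc hI hcI q.2)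
  obtain ⟨r, hr⟩ := mem_annihilator_quotient_one_iff.mp hu ⟨_, hcq⟩
  replace hr : algebraMap R Q r = u • (algebraMap R Q c * q) := congrArg Subtype.val hr
  refine ⟨⟨u • q, (h.isIntegral_of_mem_blowupAlgebra hc q.2).smul u, r, ?_⟩, Subtype.ext ?_⟩
  · rw [hr, mul_smul_comm]
  · exact Algebra.smul_def u (q : Q)

theorem mem_range_algebraMap_of_mem_map_of_tmul_one_eq [IsNoetherianRing R] [Module.Finite R T]
    {M : Ideal R} [M.IsMaximal] (hcM : IsTransversal Q M c)
    (hclosed : IsStrictlyClosedIn (h.blowup hc) (h.blowupAlgebra hc T)) {y : T}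
    (hyM : y ∈ M.map (algebraMap R T)) (hy : y ⊗ₜ[R] (1 : T) = 1 ⊗ₜ[R] y) :
    y ∈ (algebraMap R T).range := by
  have hyM' : (y : Q) ∈ M • Subalgebra.toSubmodule T :=
    (Submodule.mem_smul_top_iff M (Subalgebra.toSubmodule T) y).mp
      (Ideal.smul_top_eq_map M (S := T) ▸ hyM)
  obtain ⟨z, hz, hzy⟩ := h.exists_mem_blowupAlgebra_mul_eq hc hcM hyM'
  let f : T →ₐ[R] h.blowupAlgebra hc T :=
    Subalgebra.inclusion (show T ≤ (h.blowupAlgebra hc T).restrictScalars R from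
      Algebra.subset_adjoin)
  have hreg : IsSMulRegular (h.blowupAlgebra hc T) (algebraMap R (h.blowup hc) c) :=
    fun _ _ hcz => Subtype.ext (hc.mul_left_cancel (congrArg Subtype.val hcz))
  have hdvd : ∀ m ∈ M, ∃ b : h.blowup hc, algebraMap R _ m = algebraMap R _ c * b := by
    intro m hm
    obtain ⟨b, hb, hbm⟩ := hcM.exists_isIntegral_mul_eq m hm
    exact ⟨⟨b, hb, m, hbm⟩, Subtype.ext hbm.symm⟩
  obtain ⟨b, hb⟩ := hclosed ⟨z, hz⟩ <|
    tmul_one_eq_of_mul_eq hreg hdvd f hyM hy (Subtype.ext hzy.symm)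
  obtain ⟨r, hr⟩ := b.2.2
  replace hb : (b : Q) = z := congrArg Subtype.val hb
  exact ⟨r, Subtype.ext (hr.symm.trans (hb ▸ hzy))⟩

theorem isStrictlyClosedIn_of_blowupAlgebra [IsNoetherianRing R] [Module.Finite R T] {M : Ideal R}
    [M.IsMaximal] (hcM : IsTransversal Q M c) (hMT : M.map (algebraMap R T) ≠ ⊤)
    (hclosed : IsStrictlyClosedIn (h.blowup hc) (h.blowupAlgebra hc T)) :
    IsStrictlyClosedIn R T := by
  intro x hx
  obtain ⟨a, ha⟩ := exists_sub_algebraMap_mem_map_of_tmul_one_eq M hMT hx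
  have hxa : (x - algebraMap R T a) ⊗ₜ[R] (1 : T) = 1 ⊗ₜ[R] (x - algebraMap R T a) := by
    rw [TensorProduct.sub_tmul, TensorProduct.tmul_sub, hx, Algebra.algebraMap_eq_smul_one,
      TensorProduct.smul_tmul]
  obtain ⟨r, hr⟩ := h.mem_range_algebraMap_of_mem_map_of_tmul_one_eq hc hcM hclosed ha hxa
  exact ⟨r + a, by rw [map_add, hr, sub_add_cancel]⟩

end IsArfIn

theorem IsArfIn.isStrictlyClosedIn_of_length_lt {R Q : Type u} [CommRing R] [IsNoetherianRing R]
    [CommRing Q] [Algebra R Q] [FaithfulSMul R Q] (h : IsArfIn R Q)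
    (T : Subalgebra R Q) [Module.Finite R T] {a : R}
    (ha : a ∈ Module.annihilator R (T ⧸ (1 : Submodule R T)))
    (hu : IsUnit (algebraMap R Q a)) {n : ℕ}
    (hn : Module.length R (T ⧸ (1 : Submodule R T)) < n) : IsStrictlyClosedIn R T := by
  induction n generalizing R with
  | zero => simp at hn
  | succ n ih =>
    cases subsingleton_or_nontrivial (T ⧸ (1 : Submodule R T))
    · exact isStrictlyClosedIn_of_subsingleton_quotient_one
    obtain ⟨M, hM, hle, hMtop⟩ :=
      exists_isMaximal_annihilator_le_smul_top_ne_top R (T ⧸ (1 : Submodule R T))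
    have hMclosed := isIntegrallyClosedIdeal_of_isRadical hM.isPrime.isRadical
    obtain ⟨c, hcM⟩ := h.exists_isTransversal M hMclosed ⟨a, hle ha, hu⟩
    have hc := hcM.isUnit
    refine h.isStrictlyClosedIn_of_blowupAlgebra hc hcM
      (map_ne_top_of_smul_top_quotient_ne_top hMtop) ?_
    have := h.isNoetherianRing_blowup hc
    have := h.finite_blowupAlgebra hc (T := T)
    obtain ⟨hnoeth, hart⟩ := isFiniteLength_iff_isNoetherian_isArtinian.mp
      (Module.length_ne_top_iff.mp hn.ne_top)
    refine ih (h.isArfIn_blowup hc) _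
      (h.algebraMap_mem_annihilator_blowupAlgebra_quotient_one hc hMclosed hcM.mem ha) hu ?_
    have := (h.length_blowupAlgebra_quotient_one_le hc T hMclosed hcM.mem).trans_lt
      (Submodule.length_lt hMtop)
    exact this.trans_le (Order.le_of_lt_add_one hn)

theorem isFiniteLength_of_mem_annihilator {R N : Type*} [CommRing R] [IsNoetherianRing R]
    [Ring.KrullDimLE 1 R] [AddCommGroup N] [Module R N] [Module.Finite R N] {a : R} (ha : a ∈ R⁰)
    (haN : a ∈ Module.annihilator R N) : IsFiniteLength R N := by
  let _ : Module (R ⧸ Module.annihilator R N) N := Module.quotientAnnihilator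
  have hle : Ideal.span {a} ≤ Module.annihilator R N :=
    (Ideal.span_singleton_le_iff_mem _).mpr haN
  obtain ⟨-, hart⟩ := isFiniteLength_iff_isNoetherian_isArtinian.mp <|
    (isFiniteLength_quotient_span_singleton R ha).of_surjective (Submodule.factor_surjective hle)
  have : IsArtinianRing (R ⧸ Module.annihilator R N) := isArtinian_of_tower R hart
  have : Module.Finite (R ⧸ Module.annihilator R N) N := .of_restrictScalars_finite R _ N
  exact isFiniteLength_iff_isNoetherian_isArtinian.mpr ⟨inferInstance,
    isArtinian_of_surjective_algebraMap (R := R ⧸ Module.annihilator R N)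
      Ideal.Quotient.mk_surjective⟩

theorem exists_mem_nonZeroDivisors_annihilator_quotient_one {R Q : Type*} [CommRing R] [CommRing Q]
    [Algebra R Q] [IsFractionRing R Q] (T : Subalgebra R Q) [Module.Finite R T] :
    ∃ a ∈ R⁰, a ∈ Module.annihilator R (T ⧸ (1 : Submodule R T)) := by
  obtain ⟨s, hs⟩ := Module.Finite.fg_top (R := R) (M := T)
  obtain ⟨a, ha⟩ := IsLocalization.exist_integer_multiples R⁰ s (fun t => (t : Q))
  refine ⟨a, a.2, mem_annihilator_quotient_one_iff.mpr fun t => ?_⟩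
  suffices hle : ⊤ ≤ (1 : Submodule R T).comap (a • .id) from
    Submodule.mem_one.mp (hle (Submodule.mem_top (x := t)))
  rw [← hs, Submodule.span_le]
  intro t ht
  obtain ⟨r, hr⟩ := ha t ht
  exact Submodule.mem_one.mpr ⟨r, Subtype.ext hr⟩

theorem IsStrictlyClosedIn.of_injective {R S T : Type*} [CommRing R] [CommRing S] [CommRing T]
    [Algebra R S] [Algebra R T] (h : IsStrictlyClosedIn R T) (f : S →ₐ[R] T)
    (hf : Function.Injective f) : IsStrictlyClosedIn R S := by
  intro x hx
  have hfx := congrArg (TensorProduct.map f.toLinearMap f.toLinearMap) hx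
  simp only [TensorProduct.map_tmul, AlgHom.toLinearMap_apply, map_one] at hfx
  obtain ⟨r, hr⟩ := h (f x) hfx
  exact ⟨r, hf ((f.commutes r).trans hr)⟩

theorem exists_fg_subalgebra_tmul_one_eq {R S : Type*} [CommRing R] [CommRing S] [Algebra R S]
    {x : S} (hx : x ⊗ₜ[R] (1 : S) = 1 ⊗ₜ[R] x) :
    ∃ (T : Subalgebra R S) (y : T), T.FG ∧ y = x ∧ y ⊗ₜ[R] (1 : T) = 1 ⊗ₜ[R] y := by
  let A := Algebra.adjoin R {x}
  have hA : A.FG := ⟨{x}, by simp [A]⟩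
  let x' : A := ⟨x, Algebra.self_mem_adjoin_singleton R x⟩
  obtain ⟨B, hAB, hB, hxB⟩ := TensorProduct.Algebra.eq_of_fg_of_subtype_eq hA
    (t := x' ⊗ₜ[R] (1 : S)) (t' := 1 ⊗ₜ[R] x) hx
  replace hxB := congrArg (TensorProduct.comm R _ _) hxB
  obtain ⟨C, hAC, hC, hxC⟩ := TensorProduct.Algebra.eq_of_fg_of_subtype_eq hA
    (t := (1 : A) ⊗ₜ[R] Subalgebra.inclusion hAB x') (t' := x' ⊗ₜ[R] (1 : B)) hxB
  refine ⟨B ⊔ C, Subalgebra.inclusion (hAB.trans le_sup_left) x', hB.sup hC, rfl, ?_⟩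
  exact (congrArg (TensorProduct.map
    (Subalgebra.inclusion (le_sup_right : C ≤ B ⊔ C)).toLinearMap
    (Subalgebra.inclusion (le_sup_left : B ≤ B ⊔ C)).toLinearMap) hxC).symm

theorem isStrictlyClosedIn_of_forall_fg {R S : Type*} [CommRing R] [CommRing S] [Algebra R S]
    (h : ∀ T : Subalgebra R S, T.FG → IsStrictlyClosedIn R T) : IsStrictlyClosedIn R S := by
  intro x hx
  obtain ⟨T, y, hT, rfl, hy⟩ := exists_fg_subalgebra_tmul_one_eq hx
  obtain ⟨r, hr⟩ := h T hT y hy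
  exact ⟨r, congrArg Subtype.val hr⟩

theorem IsArfIn.isStrictlyClosedIn_integralClosure {R Q : Type u} [CommRing R]
    [IsNoetherianRing R] [Ring.KrullDimLE 1 R] [CommRing Q] [Algebra R Q] [IsFractionRing R Q]
    (h : IsArfIn R Q) : IsStrictlyClosedIn R (integralClosure R Q) := by
  refine isStrictlyClosedIn_of_forall_fg fun T hT => ?_
  have := T.fg_iff_finiteType.mp hT
  have : Algebra.IsIntegral R T := .of_injective T.val Subtype.val_injective
  have : Module.Finite R T := Algebra.IsIntegral.finite
  let e : T ≃ₐ[R] T.map (integralClosure R Q).val :=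
    T.equivMapOfInjective _ Subtype.val_injective
  have : Module.Finite R (T.map (integralClosure R Q).val) := .equiv e.toLinearEquiv
  have : FaithfulSMul R Q := (faithfulSMul_iff_algebraMap_injective R Q).mpr
    (IsFractionRing.injective R Q)
  obtain ⟨a, ha, haT⟩ :=
    exists_mem_nonZeroDivisors_annihilator_quotient_one (T.map (integralClosure R Q).val)
  obtain ⟨n, hn⟩ := ENat.ne_top_iff_exists.mp
    (Module.length_ne_top_iff.mpr (isFiniteLength_of_mem_annihilator ha haT))
  refine (h.isStrictlyClosedIn_of_length_lt _ haT
    (isUnit_algebraMap_iff_mem_nonZeroDivisors.mpr ha) (n := n + 1) ?_).of_injective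
    e.toAlgHom e.injective
  rw [← hn]
  exact_mod_cast n.lt_succ_self

theorem isStrictlyClosed_iff_isStrictlyClosedIn (A : Type*) [CommRing A] :
    IsStrictlyClosed A ↔ IsStrictlyClosedIn A (integralClosure A (FractionRing A)) := by
  constructor
  · intro h x hx
    obtain ⟨a, ha⟩ := h x ⟨x.2, hx⟩
    exact ⟨a, Subtype.ext ha⟩
  · rintro h x ⟨hx, hxx⟩
    obtain ⟨a, ha⟩ := h _ hxx
    exact ⟨a, congrArg Subtype.val ha⟩

theorem krullDimLE_of_forall_ringKrullDim_localization_le {A : Type*} [CommRing A] {n : ℕ}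
    (h : ∀ (M : Ideal A) [M.IsMaximal], ringKrullDim (Localization.AtPrime M) ≤ n) :
    Ring.KrullDimLE n A := by
  rw [Ring.krullDimLE_iff, ringKrullDim_le_iff_isMaximal_height_le]
  intro M hM
  exact (IsLocalization.AtPrime.ringKrullDim_eq_height M (Localization.AtPrime M)).symm.trans_le
    (h M)

theorem strictlyClosed_iff_arf_general (A : Type*) [CommRing A] [IsNoetherianRing A]
    [Ring.KrullDimLE 1 A] [Finite (MaximalSpectrum A)] : IsStrictlyClosed A ↔ IsArfRing A := by
  rw [isStrictlyClosed_iff_isStrictlyClosedIn, isArfRing_iff_isArfIn]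
  exact ⟨IsStrictlyClosedIn.isArfIn, IsArfIn.isStrictlyClosedIn_integralClosure⟩

/-- A Noetherian semi-local ring `A` whose localizations at maximal ideals are
one-dimensional Cohen–Macaulay local rings is strictly closed in `Ā` iff it is an
Arf ring. -/
theorem strictlyClosed_iff_arf (A : Type*) [CommRing A] [IsNoetherianRing A]
    (hsemi : {M : Ideal A | M.IsMaximal}.Finite)
    (hCM : ∀ (M : Ideal A) [M.IsMaximal],
      ringKrullDim (Localization.AtPrime M) = 1 ∧
        RingDepthGE (Localization.AtPrime M) 1) :
    IsStrictlyClosed A ↔ IsArfRing A := by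
  have : Ring.KrullDimLE 1 A :=
    krullDimLE_of_forall_ringKrullDim_localization_le fun M _ => (hCM M).1.le
  have : Finite (MaximalSpectrum A) :=
    (MaximalSpectrum.equivSubtype A).finite_iff.mpr hsemi.to_subtype
  exact strictlyClosed_iff_arf_general A
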